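/- Let F be a field, let R be an infinite, noncommutative, simple unital associative F-algebra, and let p ∈ F[x] be a nonconstant polynomial. Then the additive subgroup of R generated by {p(ab) − p(ba) : a, b ∈ R} equals the additive subgroup [R,R] of R generated by all commutators xy − yx, and the subring of R generated by {p(ab) − p(ba) : a, b ∈ R} equals R. -/

import Mathlib

namespace PC

open scoped Pointwise

/-- Herstein: a noncommutative subring which is a Lie ideal of a simple ring is everything. -/
theorem subring_eq_top {R : Type*} [Ring R] [IsSimpleRing R] (B : Subring R)
    (hL : ∀ b ∈ B, ∀ r : R, b * r - r * b ∈ B)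
    {x y : R} (hx : x ∈ B) (hy : y ∈ B) (hxy : x * y ≠ y * x) : B = ⊤ := by
  have h1 : ∀ r, (x * y - y * x) * r ∈ B := by
    intro r
    have := B.sub_mem (hL x hx (y * r)) (B.mul_mem hy (hL x hx r))
    convert this using 1
    noncomm_ring
  have h2 : ∀ s r, s * (x * y - y * x) * r ∈ B := by
    intro s r
    have := B.sub_mem (h1 (r * s)) (hL _ (h1 r) s)
    convert this using 1
    noncomm_ring
  have h3 : ∀ z ∈ TwoSidedIdeal.span {x * y - y * x}, z ∈ B := by
    intro z hz
    rw [TwoSidedIdeal.mem_span_iff_mem_addSubgroup_closure] at hz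
    have hle : AddSubgroup.closure ((Set.univ : Set R) * {x * y - y * x} * (Set.univ : Set R)) ≤
        B.toAddSubgroup := by
      rw [AddSubgroup.closure_le]
      rintro _ ⟨_, ⟨s, -, t, ht, rfl⟩, r, -, rfl⟩
      rw [Set.mem_singleton_iff] at ht
      subst ht
      exact h2 s r
    exact hle hz
  have h4 : (TwoSidedIdeal.span {x * y - y * x}) = ⊤ := by
    refine (eq_bot_or_eq_top _).resolve_left ?_
    intro h
    have h5 : x * y - y * x ∈ TwoSidedIdeal.span {x * y - y * x} :=
      TwoSidedIdeal.subset_span (Set.mem_singleton _)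
    rw [h, TwoSidedIdeal.mem_bot] at h5
    exact hxy (sub_eq_zero.1 h5)
  rw [eq_top_iff]
  intro z _
  apply h3
  rw [h4]
  trivial

/-- The set of `x` with `[x, R] ⊆ V`, a subring. -/
def comSub {R : Type*} [Ring R] (V : AddSubgroup R) : Subring R where
  carrier := {x | ∀ r, x * r - r * x ∈ V}
  mul_mem' := by
    intro x y hx hy r
    have := V.add_mem (hx (y * r)) (hy (r * x))
    convert this using 1
    noncomm_ring
  one_mem' := by intro r; simp
  add_mem' := by
    intro x y hx hy r
    have := V.add_mem (hx r) (hy r)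
    convert this using 1
    noncomm_ring
  zero_mem' := by intro r; simp
  neg_mem' := by
    intro x hx r
    have := V.neg_mem (hx r)
    convert this using 1
    noncomm_ring

theorem mem_comSub {R : Type*} [Ring R] {V : AddSubgroup R} {x : R} :
    x ∈ comSub V ↔ ∀ r, x * r - r * x ∈ V := Iff.rfl

theorem lie_ideal_contains {R : Type*} [Ring R] [IsSimpleRing R] (L : AddSubgroup R)
    (hL : ∀ b ∈ L, ∀ r : R, b * r - r * b ∈ L)
    {x y : R} (hx : x ∈ L) (hy : y ∈ L) (hxy : x * y ≠ y * x) (a b : R) :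
    a * b - b * a ∈ L := by
  have h : comSub L = ⊤ := by
    refine subring_eq_top (comSub L) ?_ (x := x) (y := y) (hL x hx) (hL y hy) hxy
    intro b hb r s
    exact hL _ (hb r) s
  have : a ∈ comSub L := by rw [h]; trivial
  exact this b

theorem closure_comm_top {R : Type*} [Ring R] [IsSimpleRing R] (S : Set R)
    (hS : AddSubgroup.closure S = AddSubgroup.closure {x : R | ∃ a b : R, x = a * b - b * a})
    (h : ∃ a b c d : R, (a * b - b * a) * (c * d - d * c) ≠ (c * d - d * c) * (a * b - b * a)) :
    Subring.closure S = ⊤ := by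
  have h0 : ∀ a b : R, a * b - b * a ∈ Subring.closure S := by
    intro a b
    have h1 : a * b - b * a ∈ AddSubgroup.closure S := by
      rw [hS]; exact AddSubgroup.subset_closure ⟨a, b, rfl⟩
    have h2 : AddSubgroup.closure S ≤ (Subring.closure S).toAddSubgroup := by
      rw [AddSubgroup.closure_le]; exact Subring.subset_closure
    exact h2 h1
  obtain ⟨a, b, c, d, h⟩ := h
  exact subring_eq_top _ (fun b _ r => h0 b r) (h0 a b) (h0 c d) h

/-! ### Words -/

section words
variable {ι : Type*} [DecidableEq ι]

theorem word_add {A : Type*} [Ring A] (w : List ι) (hw : w.Nodup) (x : ι → A) (i : ι) (hi : i ∈ w)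
    (u v : A) : (w.map (Function.update x i (u + v))).prod =
      (w.map (Function.update x i u)).prod + (w.map (Function.update x i v)).prod := by
  obtain ⟨l₁, l₂, rfl⟩ := List.append_of_mem hi
  have h1 : i ∉ l₁ := by
    intro h
    exact (List.nodup_append.1 hw).2.2 i h i (by simp) rfl
  have h2 : i ∉ l₂ := by
    have := (List.nodup_append.1 hw).2.1
    exact (List.nodup_cons.1 this).1
  have e : ∀ (z : A) (l : List ι), i ∉ l → l.map (Function.update x i z) = l.map x := by
    intro z l hl
    apply List.map_congr_left
    intro j hj
    rw [Function.update_of_ne]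
    rintro rfl; exact hl hj
  simp only [List.map_append, List.map_cons, List.prod_append, List.prod_cons,
    Function.update_self, e _ _ h1, e _ _ h2]
  noncomm_ring

theorem word_lie {A : Type*} [Ring A] (x : ι → A) (r : A) (w : List ι) (hw : w.Nodup) :
    (w.map x).prod * r - r * (w.map x).prod =
      ∑ i ∈ w.toFinset, (w.map (Function.update x i (x i * r - r * x i))).prod := by
  induction w with
  | nil => simp
  | cons j w ih =>
    obtain ⟨hj, hw'⟩ := List.nodup_cons.1 hw
    have ih := ih hw'
    rw [List.toFinset_cons, Finset.sum_insert (by simpa using hj)]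
    have e1 : w.map (Function.update x j (x j * r - r * x j)) = w.map x := by
      apply List.map_congr_left
      intro k hk
      rw [Function.update_of_ne]
      rintro rfl; exact hj hk
    have e2 : ∑ i ∈ w.toFinset, ((j :: w).map (Function.update x i (x i * r - r * x i))).prod
        = x j * ∑ i ∈ w.toFinset, (w.map (Function.update x i (x i * r - r * x i))).prod := by
      rw [Finset.mul_sum]
      apply Finset.sum_congr rfl
      intro i hi
      rw [List.map_cons, List.prod_cons, Function.update_of_ne]
      rintro rfl
      exact hj (by simpa using hi)
    rw [e2, ← ih]
    simp only [List.map_cons, List.prod_cons, Function.update_self, e1]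
    noncomm_ring

/-- An expression `∑ ε w` in words. -/
def wval {κ A : Type*} [Ring A] (Ω : Finset κ) (ε : κ → ℤ) (w : κ → List ι) (x : ι → A) : A :=
  ∑ k ∈ Ω, ε k • ((w k).map x).prod

variable {κ : Type*} (Ω : Finset κ) (ε : κ → ℤ) (w : κ → List ι)

theorem wval_add {A : Type*} [Ring A] (hw : ∀ k ∈ Ω, (w k).Nodup ∧ ∀ i, i ∈ w k)
    (x : ι → A) (i : ι) (u v : A) :
    wval Ω ε w (Function.update x i (u + v)) =
      wval Ω ε w (Function.update x i u) + wval Ω ε w (Function.update x i v) := by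
  unfold wval
  rw [← Finset.sum_add_distrib]
  apply Finset.sum_congr rfl
  intro k hk
  rw [word_add _ (hw k hk).1 x i ((hw k hk).2 i), smul_add]

theorem wval_lie {A : Type*} [Ring A] [Fintype ι] (hw : ∀ k ∈ Ω, (w k).Nodup ∧ ∀ i, i ∈ w k)
    (x : ι → A) (r : A) :
    wval Ω ε w x * r - r * wval Ω ε w x =
      ∑ i, wval Ω ε w (Function.update x i (x i * r - r * x i)) := by
  unfold wval
  rw [Finset.sum_comm, Finset.sum_mul, Finset.mul_sum, ← Finset.sum_sub_distrib]
  apply Finset.sum_congr rfl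
  intro k hk
  have h : (w k).toFinset = Finset.univ := by
    ext i; simp [(hw k hk).2 i]
  have := word_lie x r (w k) (hw k hk).1
  rw [h] at this
  rw [← Finset.smul_sum, ← this, smul_sub, smul_mul_assoc, mul_smul_comm]

/-- Extending a vanishing from generators to everything, for coordinatewise additive maps. -/
theorem coord_ext {A B : Type*} [AddCommGroup A] [AddCommGroup B] [Fintype ι]
    (f : (ι → A) → B)
    (hf : ∀ x i u v, f (Function.update x i (u + v)) =
      f (Function.update x i u) + f (Function.update x i v))
    (S : Set A) (hS : AddSubgroup.closure S = ⊤) (h0 : ∀ x, (∀ i, x i ∈ S) → f x = 0) (x : ι → A) :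
    f x = 0 := by
  have key : ∀ s : Finset ι, ∀ x : ι → A, (∀ i ∉ s, x i ∈ S) → f x = 0 := by
    intro s
    induction s using Finset.induction_on with
    | empty => intro x hx; exact h0 x (fun i => hx i (by simp))
    | insert i s his ih =>
      intro x hx
      have hg : ∀ u, f (Function.update x i u) = 0 := by
        let F : A →+ B := AddMonoidHom.mk' (fun u => f (Function.update x i u)) (hf x i)
        have : F = 0 := by
          refine AddMonoidHom.eq_of_eqOn_dense hS ?_
          intro u hu
          apply ih
          intro j hj
          by_cases hji : j = i
          · subst hji; simpa using hu
          · rw [Function.update_of_ne hji]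
            exact hx j (by simp [hji, hj])
        intro u
        exact DFunLike.congr_fun this u
      have := hg (x i)
      rwa [Function.update_eq_self] at this
  exact key Finset.univ x (by simp)

end words

end PC

namespace PC

/-- Evaluation of the polynomial with (central) coefficients `γ`. -/
def P {R : Type*} [Ring R] (γ : ℕ → R) (n : ℕ) (x : R) : R :=
  ∑ i ∈ Finset.range (n + 1), γ i * x ^ i

/-- The additive group generated by `P(ab) - P(ba)`. -/
def V {R : Type*} [Ring R] (γ : ℕ → R) (n : ℕ) : AddSubgroup R :=
  AddSubgroup.closure {x | ∃ a b, x = P γ n (a * b) - P γ n (b * a)}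

theorem sum_sign {n : ℕ} (I : Finset (Fin n)) :
    (∑ S : Finset (Fin n), if I ⊆ S then (-1 : ℤ) ^ S.card else 0) =
      if I = Finset.univ then (-1) ^ n else 0 := by
  have h := Finset.prod_add (fun _ : Fin n => (-1 : ℤ)) (fun i => if i ∈ I then 0 else 1)
    Finset.univ
  rw [Finset.powerset_univ] at h
  have e : ∀ S : Finset (Fin n), (∏ i ∈ S, (-1 : ℤ)) *
      ∏ i ∈ Finset.univ \ S, (if i ∈ I then (0 : ℤ) else 1) =
      if I ⊆ S then (-1 : ℤ) ^ S.card else 0 := by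
    intro S
    rw [Finset.prod_const]
    split_ifs with hIS
    · rw [Finset.prod_eq_one, mul_one]
      intro i hi
      rw [if_neg]
      intro h'
      simp at hi
      exact hi (hIS h')
    · obtain ⟨i, hi, hi'⟩ := Finset.not_subset.1 hIS
      rw [Finset.prod_eq_zero (i := i), mul_zero]
      · simpa using hi'
      · simp [hi]
  simp_rw [e] at h
  rw [← h]
  split_ifs with hI
  · subst hI; simp
  · obtain ⟨i, hi⟩ : ∃ i, i ∉ I := by
      by_contra! hc
      exact hI (Finset.eq_univ_iff_forall.2 hc)
    rw [Finset.prod_eq_zero (Finset.mem_univ i)]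
    simp [hi]

/-- Monomial. -/
def mono {R : Type*} [Ring R] {n k : ℕ} (a b : Fin n → R) (r : Fin k → Fin n × Fin n) : R :=
  (List.ofFn fun t => a (r t).1 * b (r t).2).prod

theorem pow_expand {R : Type*} [Ring R] {n : ℕ} (k : ℕ) (a b : Fin n → R)
    (S S' : Finset (Fin n)) :
    ((∑ i ∈ S, a i) * (∑ j ∈ S', b j)) ^ k =
      ∑ r : Fin k → Fin n × Fin n,
        if (Finset.univ.image fun t => (r t).1) ⊆ S ∧ (Finset.univ.image fun t => (r t).2) ⊆ S'
        then mono a b r else 0 := by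
  classical
  have h := MultilinearMap.map_sum_finset (MultilinearMap.mkPiAlgebraFin ℤ k R)
    (fun _ (q : Fin n × Fin n) => a q.1 * b q.2) (fun _ => S ×ˢ S')
  simp only [MultilinearMap.mkPiAlgebraFin_apply] at h
  rw [Finset.sum_mul_sum, ← Finset.sum_product']
  rw [List.ofFn_const, List.prod_replicate] at h
  rw [h, ← Finset.sum_filter]
  apply Finset.sum_congr
  · ext r
    simp only [Fintype.mem_piFinset, Finset.mem_product, Finset.mem_filter, Finset.mem_univ,
      true_and, Finset.image_subset_iff, forall_true_left]
    exact forall_and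
  · intro r _
    rfl

/-- Symmetrized monomials. -/
def symm {R : Type*} [Ring R] {n : ℕ} (k : ℕ) (a b : Fin n → R) : R :=
  ∑ r : Fin k → Fin n × Fin n, if (Function.Surjective fun t => (r t).1) ∧
    (Function.Surjective fun t => (r t).2) then mono a b r else 0

theorem alt_sum {R : Type*} [Ring R] {n : ℕ} (k : ℕ) (a b : Fin n → R) :
    ∑ S : Finset (Fin n), ∑ S' : Finset (Fin n),
      ((-1 : ℤ) ^ S.card * (-1) ^ S'.card) • ((∑ i ∈ S, a i) * (∑ j ∈ S', b j)) ^ k =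
    symm k a b := by
  simp_rw [pow_expand, Finset.smul_sum]
  have e : ∀ S S' : Finset (Fin n), ∀ r : Fin k → Fin n × Fin n,
      ((-1 : ℤ) ^ S.card * (-1) ^ S'.card) •
        (if (Finset.univ.image fun t => (r t).1) ⊆ S ∧ (Finset.univ.image fun t => (r t).2) ⊆ S'
        then mono a b r else 0) =
      ((if (Finset.univ.image fun t => (r t).1) ⊆ S then (-1 : ℤ) ^ S.card else 0) *
        (if (Finset.univ.image fun t => (r t).2) ⊆ S' then (-1 : ℤ) ^ S'.card else 0)) •
        mono a b r := by
    intro S S' r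
    by_cases h1 : (Finset.univ.image fun t => (r t).1) ⊆ S <;>
    by_cases h2 : (Finset.univ.image fun t => (r t).2) ⊆ S' <;> simp [h1, h2]
  simp_rw [e]
  have e2 : ∀ S : Finset (Fin n), ∀ f : Finset (Fin n) → (Fin k → Fin n × Fin n) → R,
    ∑ S', ∑ r, f S' r = ∑ r, ∑ S', f S' r := fun S f => Finset.sum_comm
  simp_rw [e2 ∅]
  unfold symm
  apply Finset.sum_congr rfl
  intro r _
  simp_rw [← Finset.sum_smul]
  rw [← Finset.sum_mul_sum, sum_sign, sum_sign]
  have hs : ∀ f : Fin k → Fin n, Finset.univ.image f = Finset.univ ↔ Function.Surjective f := by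
    intro f
    rw [Finset.eq_univ_iff_forall]
    simp [Function.Surjective]
  simp only [hs]
  by_cases h1 : Function.Surjective fun t => (r t).1 <;>
    by_cases h2 : Function.Surjective fun t => (r t).2 <;> simp [h1, h2, ← mul_pow]

theorem symm_lt {R : Type*} [Ring R] {n k : ℕ} (hk : k < n) (a b : Fin n → R) :
    symm k a b = 0 := by
  unfold symm
  apply Finset.sum_eq_zero
  intro r _
  rw [if_neg]
  rintro ⟨h, -⟩
  have := Fintype.card_le_of_surjective _ h
  simp at this
  omega

theorem pol_mem {R : Type*} [Ring R] (γ : ℕ → R) (n : ℕ) (a b : Fin n → R) :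
    γ n * (symm n a b - symm n b a) ∈ V γ n := by
  have h : ∑ S : Finset (Fin n), ∑ S' : Finset (Fin n),
      ((-1 : ℤ) ^ S.card * (-1) ^ S'.card) •
        (P γ n ((∑ i ∈ S, a i) * (∑ j ∈ S', b j)) - P γ n ((∑ j ∈ S', b j) * (∑ i ∈ S, a i)))
      = γ n * (symm n a b - symm n b a) := by
    have h1 : ∀ a b : Fin n → R, ∑ S : Finset (Fin n), ∑ S' : Finset (Fin n),
        ((-1 : ℤ) ^ S.card * (-1) ^ S'.card) • P γ n ((∑ i ∈ S, a i) * (∑ j ∈ S', b j)) =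
        γ n * symm n a b := by
      intro a b
      unfold P
      simp_rw [Finset.smul_sum]
      have e2 : ∀ S : Finset (Fin n), ∀ f : Finset (Fin n) → ℕ → R,
        ∑ S', ∑ r ∈ Finset.range (n + 1), f S' r = ∑ r ∈ Finset.range (n + 1), ∑ S', f S' r :=
        fun S f => Finset.sum_comm
      simp_rw [e2 ∅]
      have : ∀ k, (∑ S : Finset (Fin n), ∑ S' : Finset (Fin n),
          ((-1 : ℤ) ^ S.card * (-1) ^ S'.card) •
            (γ k * ((∑ i ∈ S, a i) * (∑ j ∈ S', b j)) ^ k)) = γ k * symm k a b := by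
        intro k
        rw [← alt_sum]
        simp_rw [Finset.mul_sum, mul_smul_comm]
      simp_rw [this]
      rw [Finset.sum_range_succ, Finset.sum_eq_zero, zero_add]
      intro k hk
      rw [symm_lt (Finset.mem_range.1 hk), mul_zero]
    simp_rw [smul_sub, Finset.sum_sub_distrib]
    rw [h1, Finset.sum_comm, mul_sub, ← h1 b a]
    congr 1
    apply Finset.sum_congr rfl; intro S _
    apply Finset.sum_congr rfl; intro S' _
    rw [mul_comm ((-1 : ℤ) ^ _)]
  rw [← h]
  refine AddSubgroup.sum_mem _ fun S _ => AddSubgroup.sum_mem _ fun S' _ => ?_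
  refine AddSubgroup.zsmul_mem _ ?_ _
  exact AddSubgroup.subset_closure (k := {x | ∃ a b, x = P γ n (a * b) - P γ n (b * a)}) ⟨_, _, rfl⟩

/-! ### `symm n a b - symm n b a` as a word expression -/

/-- index type -/
abbrev Idx (n : ℕ) := (Fin n → Fin n × Fin n) × Bool

/-- words -/
def wd (n : ℕ) : Idx n → List (Fin n ⊕ Fin n)
  | (r, true) => (List.finRange n).flatMap fun t => [Sum.inl (r t).1, Sum.inr (r t).2]
  | (r, false) => (List.finRange n).flatMap fun t => [Sum.inr (r t).1, Sum.inl (r t).2]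

/-- index set -/
noncomputable def Om (n : ℕ) : Finset (Idx n) := by
  classical
  exact Finset.univ.filter fun q => (Function.Surjective fun t => (q.1 t).1) ∧
    (Function.Surjective fun t => (q.1 t).2)

/-- signs -/
def sg (n : ℕ) : Idx n → ℤ
  | (_, true) => 1
  | (_, false) => -1

theorem mem_Om {n : ℕ} {q : Idx n} : q ∈ Om n ↔ (Function.Surjective fun t => (q.1 t).1) ∧
    (Function.Surjective fun t => (q.1 t).2) := by
  simp [Om]

/-- the generic multilinear expression -/
noncomputable def G {R : Type*} [Ring R] (n : ℕ) (x : Fin n ⊕ Fin n → R) : R :=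
  wval (Om n) (sg n) (wd n) x

theorem G_eq {R : Type*} [Ring R] (n : ℕ) (x : Fin n ⊕ Fin n → R) :
    G n x = symm n (x ∘ Sum.inl) (x ∘ Sum.inr) - symm n (x ∘ Sum.inr) (x ∘ Sum.inl) := by
  classical
  unfold G wval symm Om
  rw [Finset.sum_filter, Fintype.sum_prod_type]
  rw [← Finset.sum_sub_distrib]
  apply Finset.sum_congr rfl
  intro r _
  rw [Fintype.sum_bool]
  have e : ∀ f g : Fin n → R, ((List.finRange n).flatMap fun t => [f t, g t]).prod =
      (List.ofFn fun t => f t * g t).prod := by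
    intro f g
    rw [List.ofFn_eq_map]
    induction List.finRange n with
    | nil => simp
    | cons t l ih => simp [List.flatMap_cons, ih, mul_assoc]
  simp only [wd, sg, mono, List.map_flatMap, List.map_cons, List.map_nil, Function.comp]
  rw [e, e]
  split_ifs <;> simp [sub_eq_add_neg]

theorem wd_ok (n : ℕ) : ∀ q ∈ Om n, (wd n q).Nodup ∧ ∀ i, i ∈ wd n q := by
  rintro ⟨r, b⟩ hq
  obtain ⟨h1, h2⟩ := mem_Om.1 hq
  have i1 := Finite.injective_iff_surjective.2 h1
  have i2 := Finite.injective_iff_surjective.2 h2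
  constructor
  · cases b
    · simp only [wd]
      rw [List.nodup_flatMap]
      refine ⟨by simp, ?_⟩
      refine (List.nodup_finRange n).imp ?_
      intro s t hst
      have a1 : (r s).1 ≠ (r t).1 := fun h => hst (i1 h)
      have a2 : (r s).2 ≠ (r t).2 := fun h => hst (i2 h)
      simp [Function.onFun, a1.symm, a2.symm]
    · simp only [wd]
      rw [List.nodup_flatMap]
      refine ⟨by simp, ?_⟩
      refine (List.nodup_finRange n).imp ?_
      intro s t hst
      have a1 : (r s).1 ≠ (r t).1 := fun h => hst (i1 h)
      have a2 : (r s).2 ≠ (r t).2 := fun h => hst (i2 h)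
      simp [Function.onFun, a1.symm, a2.symm]
  · intro i
    rcases i with i | i
    · obtain ⟨t, ht⟩ := h1 i
      obtain ⟨s, hs⟩ := h2 i
      cases b <;> simp only [wd, List.mem_flatMap]
      · exact ⟨s, by simp, by simp [← hs]⟩
      · exact ⟨t, by simp, by simp [← ht]⟩
    · obtain ⟨t, ht⟩ := h1 i
      obtain ⟨s, hs⟩ := h2 i
      cases b <;> simp only [wd, List.mem_flatMap]
      · exact ⟨t, by simp, by simp [← ht]⟩
      · exact ⟨s, by simp, by simp [← hs]⟩

theorem G_add {A : Type*} [Ring A] {n : ℕ}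
    (x : Fin n ⊕ Fin n → A) (i : Fin n ⊕ Fin n) (u v : A) :
    G n (Function.update x i (u + v)) =
      G n (Function.update x i u) + G n (Function.update x i v) :=
  wval_add _ _ _ (wd_ok n) x i u v

theorem G_mem {R : Type*} [Ring R] (γ : ℕ → R) (n : ℕ) (x : Fin n ⊕ Fin n → R) :
    γ n * G n x ∈ V γ n := by
  rw [G_eq]; exact pol_mem γ n _ _

/-- If `G` is not commutative then `V` contains all commutators. -/
theorem comm_mem_of_G {R : Type*} [Ring R] [IsSimpleRing R] (γ : ℕ → R)
    (n : ℕ) (hγ : ∀ x, γ n * x = x * γ n) (hu : IsUnit (γ n))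
    (x y : Fin n ⊕ Fin n → R) (hxy : G n x * G n y ≠ G n y * G n x) (a b : R) :
    a * b - b * a ∈ V γ n := by
  let L : AddSubgroup R := AddSubgroup.closure (Set.range fun x : Fin n ⊕ Fin n → R => γ n * G n x)
  have hLV : L ≤ V γ n := by
    rw [AddSubgroup.closure_le]
    rintro _ ⟨x, rfl⟩
    exact G_mem γ n x
  apply hLV
  have hm : ∀ x, γ n * G n x ∈ L := fun x => AddSubgroup.subset_closure ⟨x, rfl⟩
  refine lie_ideal_contains L ?_ (hm x) (hm y) ?_ a b
  · intro b hb r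
    induction hb using AddSubgroup.closure_induction with
    | mem b hb =>
      obtain ⟨x, rfl⟩ := hb
      have h := wval_lie _ (sg n) _ (wd_ok n) x r
      have e : γ n * G n x * r - r * (γ n * G n x) =
          ∑ i, γ n * G n (Function.update x i (x i * r - r * x i)) := by
        rw [← Finset.mul_sum]
        unfold G
        rw [← h, mul_sub, ← mul_assoc, ← mul_assoc, ← mul_assoc, hγ r]
      simp only [e]
      exact AddSubgroup.sum_mem _ fun i _ => hm _
    | zero => simp
    | add b c _ _ h1 h2 =>
      have := L.add_mem h1 h2
      convert this using 1
      noncomm_ring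
    | neg b _ h1 =>
      have := L.neg_mem h1
      convert this using 1
      noncomm_ring
  · intro h
    apply hxy
    have h1 : ∀ u v : R, γ n * (γ n * (u * v)) = γ n * u * (γ n * v) := by
      intro u v
      rw [mul_assoc (γ n) u, ← mul_assoc u (γ n), ← hγ u, mul_assoc (γ n)]
    have h2 : γ n * (γ n * (G n x * G n y)) = γ n * (γ n * (G n y * G n x)) := by
      rw [h1, h1]; exact h
    exact hu.mul_left_cancel (hu.mul_left_cancel h2)

end PC

namespace PC

theorem flatMap_pair {α β : Type*} (f g f' g' : α → β) (l : List α)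
    (h : l.flatMap (fun t => [f t, g t]) = l.flatMap (fun t => [f' t, g' t])) :
    ∀ t ∈ l, f t = f' t ∧ g t = g' t := by
  induction l with
  | nil => simp
  | cons a l ih =>
    simp only [List.flatMap_cons, List.cons_append, List.nil_append, List.cons.injEq] at h
    intro t ht
    rcases List.mem_cons.1 ht with rfl | ht
    · exact ⟨h.1, h.2.1⟩
    · exact ih h.2.2 t ht

/-- the base index -/
def q0 (n : ℕ) : Idx n := (fun t => (t, t), true)

theorem wd_inj {n : ℕ} (hn : 1 ≤ n) (q : Idx n) (h : wd n q = wd n (q0 n)) : q = q0 n := by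
  obtain ⟨r, b⟩ := q
  cases b
  · exfalso
    have := flatMap_pair _ _ _ _ _ h ⟨0, hn⟩ (List.mem_finRange _)
    simp at this
  · have := flatMap_pair _ _ _ _ _ h
    have h2 : r = fun t => (t, t) := by
      funext t
      have := this t (List.mem_finRange _)
      simp at this
      exact Prod.ext this.1 this.2
    rw [h2]; rfl

theorem wd_length {n : ℕ} (q : Idx n) : (wd n q).length = 2 * n := by
  have : ∀ (f g : Fin n → Fin n ⊕ Fin n) (l : List (Fin n)),
      (l.flatMap (fun t => [f t, g t])).length = 2 * l.length := by
    intro f g l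
    induction l with
    | nil => simp
    | cons a l ih => simp [List.flatMap_cons, ih]; omega
  obtain ⟨r, b⟩ := q
  cases b <;> simp [wd, mul_comm]

theorem q0_mem (n : ℕ) : q0 n ∈ Om n :=
  mem_Om.2 ⟨fun i => ⟨i, rfl⟩, fun i => ⟨i, rfl⟩⟩

theorem concat_pfx {α : Type*} (l u : List α) (i : α) :
    l ++ [i] <+: u ↔ l <+: u ∧ u[l.length]? = some i := by
  constructor
  · rintro ⟨m, rfl⟩
    refine ⟨⟨[i] ++ m, by simp⟩, by simp⟩
  · rintro ⟨⟨m, rfl⟩, h⟩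
    rw [List.prefix_append_right_inj]
    rw [List.getElem?_append_right le_rfl, Nat.sub_self] at h
    cases m with
    | nil => simp at h
    | cons a m => simp at h; simp [h]

theorem cons_suffix {α : Type*} (l u : List α) (i : α) :
    i :: l <:+ u ↔ l <:+ u ∧ u.reverse[l.length]? = some i := by
  have key : ∀ a b : List α, a.reverse <+: b.reverse ↔ a <:+ b := fun a b => by
    rw [← List.reverse_suffix]
    simp only [List.reverse_reverse]
  rw [← key, List.reverse_cons, concat_pfx, key, List.length_reverse]

theorem word_eval {ι T M : Type*} [DecidableEq ι] [Ring T] [AddCommGroup M] [Module T M]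
    (v : ℕ → M) (o : ℕ) (u : List ι) (Z : ι → T)
    (hZ : ∀ i, ∀ t ≤ u.length, Z i • v (o + t) = if u.reverse[t]? = some i then v (o + t + 1) else 0)
    (w : List ι) : (w <:+ u → (w.map Z).prod • v o = v (o + w.length)) ∧
      (¬ w <:+ u → (w.map Z).prod • v o = 0) := by
  induction w with
  | nil => simp
  | cons i w ih =>
    rw [List.map_cons, List.prod_cons, mul_smul]
    by_cases h : w <:+ u
    · rw [ih.1 h, hZ _ _ h.length_le]
      simp only [cons_suffix, h, true_and, List.length_cons, add_assoc]
      constructor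
      · intro h; rw [if_pos h]
      · intro h; rw [if_neg h]
    · rw [ih.2 h]
      simp [cons_suffix, h]

theorem G_eval {T M : Type*} [Ring T] [AddCommGroup M] [Module T M] {n : ℕ} (hn : 1 ≤ n)
    (v : ℕ → M) (o : ℕ) (Z : Fin n ⊕ Fin n → T)
    (hZ : ∀ i, ∀ t ≤ 2 * n, Z i • v (o + t) =
      if (wd n (q0 n)).reverse[t]? = some i then v (o + t + 1) else 0) :
    G n Z • v o = v (o + 2 * n) := by
  unfold G wval
  rw [Finset.sum_smul, Finset.sum_eq_single (q0 n)]
  · rw [smul_assoc, (word_eval v o (wd n (q0 n)) Z (by rwa [wd_length]) _).1 (List.suffix_refl _)]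
    rw [wd_length]
    simp [q0, sg]
  · intro q _ hq
    rw [smul_assoc, (word_eval v o (wd n (q0 n)) Z (by rwa [wd_length]) _).2, smul_zero]
    intro h
    apply hq
    exact wd_inj hn q (h.eq_of_length (by rw [wd_length, wd_length]))
  · exact fun h => absurd (q0_mem n) h

theorem G_kill {T M : Type*} [Ring T] [AddCommGroup M] [Module T M] {n : ℕ} (hn : 1 ≤ n)
    (v : M) (Z : Fin n ⊕ Fin n → T) (hZ : ∀ i, Z i • v = 0) : G n Z • v = 0 := by
  unfold G wval
  rw [Finset.sum_smul, Finset.sum_eq_zero]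
  intro q _
  rw [smul_assoc]
  have h : wd n q ≠ [] := by
    intro h
    have := wd_length q
    rw [h] at this
    simp at this; omega
  obtain ⟨l, i, e⟩ := List.eq_nil_or_concat (wd n q) |>.resolve_left h
  rw [e]
  simp [mul_smul, hZ]

theorem density_G {T M : Type*} [Ring T] [AddCommGroup M] [Module T M] [IsSimpleModule T M]
    (hinf : ¬ Module.Finite (Module.End T M) M) {n : ℕ} (hn : 1 ≤ n) :
    ∃ x y : Fin n ⊕ Fin n → T, G n x * G n y ≠ G n y * G n x := by
  classical
  let b := Module.Basis.ofVectorSpace (Module.End T M) M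
  have : Infinite (Module.Basis.ofVectorSpaceIndex (Module.End T M) M) := by
    by_contra hc
    rw [not_infinite_iff_finite] at hc
    exact hinf (Module.Finite.of_basis b)
  let e := Infinite.natEmbedding (Module.Basis.ofVectorSpaceIndex (Module.End T M) M)
  let v : ℕ → M := fun t => b (e t)
  have hv : Function.Injective v := b.injective.comp e.injective
  have ex : ∀ g : ℕ → M, ∃ r : T, ∀ t ≤ 4 * n, r • v t = g t := by
    intro g
    let f : Module.End (Module.End T M) M := b.constr ℕ (Function.extend e g 0)
    obtain ⟨r, hr⟩ := jacobson_density f ((Finset.range (4 * n + 1)).image v)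
    refine ⟨r, fun t ht => ?_⟩
    rw [← hr (v t) (Finset.mem_image_of_mem _ (Finset.mem_range.2 (by omega)))]
    simp only [f, v]
    rw [Module.Basis.constr_basis, e.injective.extend_apply]
  let u := (wd n (q0 n)).reverse
  have ex2 : ∀ o ≤ 2 * n, ∃ Z : Fin n ⊕ Fin n → T, (∀ i, ∀ t ≤ 2 * n, Z i • v (o + t) =
      if u[t]? = some i then v (o + t + 1) else 0) ∧ ∀ t < o, ∀ i, Z i • v t = 0 := by
    intro o ho
    choose Z hZ using fun i : Fin n ⊕ Fin n => ex fun t =>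
      if o ≤ t then (if u[t - o]? = some i then v (t + 1) else 0) else 0
    refine ⟨Z, fun i t ht => ?_, fun t ht i => ?_⟩
    · rw [hZ _ _ (by omega)]
      simp
    · rw [hZ _ _ (by omega), if_neg (by omega)]
  obtain ⟨Y, hY, -⟩ := ex2 0 (by omega)
  obtain ⟨X, hX, hX0⟩ := ex2 (2 * n) le_rfl
  refine ⟨X, Y, fun h => ?_⟩
  have h1 : (G n X * G n Y) • v 0 = v (2 * n + 2 * n) := by
    rw [mul_smul, G_eval hn v 0 Y hY, zero_add, G_eval hn v (2 * n) X hX]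
  have h2 : (G n Y * G n X) • v 0 = 0 := by
    rw [mul_smul, G_kill hn (v 0) X (hX0 0 (by omega)), smul_zero]
  rw [h, h2] at h1
  exact b.ne_zero _ h1.symm

end PC

namespace PC

theorem V_le {R : Type*} [Ring R] (γ : ℕ → R) (n : ℕ) (hγ : ∀ i x, γ i * x = x * γ i) :
    V γ n ≤ AddSubgroup.closure {x : R | ∃ a b : R, x = a * b - b * a} := by
  unfold V
  rw [AddSubgroup.closure_le]
  rintro _ ⟨a, b, rfl⟩
  unfold P
  rw [← Finset.sum_sub_distrib]
  refine AddSubgroup.sum_mem _ fun k hk => ?_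
  clear hk
  rw [← mul_sub]
  cases k with
  | zero => simp
  | succ k =>
    apply AddSubgroup.subset_closure
    refine ⟨γ (k + 1) * a, b * (a * b) ^ k, ?_⟩
    have e : (b * a) ^ (k + 1) = b * (a * b) ^ k * a := by
      induction k with
      | zero => simp
      | succ k ih => rw [pow_succ, ih, pow_succ]; simp only [mul_assoc]
    rw [e, mul_sub, pow_succ']
    congr 1
    · simp only [mul_assoc]
    · rw [← mul_assoc, hγ, mul_assoc]

theorem B_of_G {R : Type*} [Ring R] {n : ℕ} {x y : Fin n ⊕ Fin n → R}
    (hxy : G n x * G n y ≠ G n y * G n x) :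
    ∃ a b c d : R, (a * b - b * a) * (c * d - d * c) ≠ (c * d - d * c) * (a * b - b * a) := by
  by_contra! hc
  have h : ∀ x : Fin n ⊕ Fin n → R,
      G n x ∈ AddSubgroup.closure {x : R | ∃ a b : R, x = a * b - b * a} := by
    intro x
    have h1 := G_mem (fun i => if i = n then (1 : R) else 0) n x
    have h2 := V_le (fun i => if i = n then (1 : R) else 0) n (by
      intro i x
      split_ifs <;> simp) h1
    simpa using h2
  have h1 : ∀ u ∈ AddSubgroup.closure {x : R | ∃ a b : R, x = a * b - b * a}, ∀ v,
      (∀ a b, (a * b - b * a) * v = v * (a * b - b * a)) → u * v = v * u := by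
    intro u hu v hv
    induction hu using AddSubgroup.closure_induction with
    | mem u hu => obtain ⟨a, b, rfl⟩ := hu; exact hv a b
    | zero => simp
    | add b c _ _ h1 h2 => rw [add_mul, h1, h2, mul_add]
    | neg b _ h1 => rw [neg_mul, h1, mul_neg]
  apply hxy
  apply h1 _ (h x)
  intro a b
  exact (h1 _ (h y) _ fun c d => hc _ _ _ _).symm

theorem G_of_nonArtinian {R : Type*} [Ring R] [IsSimpleRing R] (h : ¬ IsArtinianRing R) {n : ℕ}
    (hn : 1 ≤ n) : ∃ x y : Fin n ⊕ Fin n → R, G n x * G n y ≠ G n y * G n x := by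
  obtain ⟨I, hI⟩ := Ideal.exists_maximal R
  have : IsSimpleModule R (R ⧸ I) := isSimpleModule_iff_isCoatom.2 hI.out
  refine density_G (M := R ⧸ I) ?_ hn
  intro hfin
  apply h
  obtain ⟨s, hs⟩ := hfin
  let φ : R →ₗ[R] (s → R ⧸ I) := LinearMap.pi fun i => LinearMap.toSpanSingleton R (R ⧸ I) i
  have hφ : Function.Injective φ := by
    rw [injective_iff_map_eq_zero]
    intro r hr
    have : Nontrivial (AddMonoid.End (R ⧸ I)) := by
      have : Nontrivial (R ⧸ I) := IsSimpleModule.nontrivial R (R ⧸ I)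
      obtain ⟨a, b, hab⟩ := this
      exact ⟨1, 0, fun h => hab (by
        have h1 := DFunLike.congr_fun h a
        have h2 := DFunLike.congr_fun h b
        simp at h1 h2
        rw [h1, h2])⟩
    have hinj := (Module.toAddMonoidEnd R (R ⧸ I)).injective
    apply hinj
    rw [map_zero]
    ext1 m
    have hm : m ∈ Submodule.span (Module.End R (R ⧸ I)) (s : Set (R ⧸ I)) := by
      rw [hs]; trivial
    show r • m = 0
    induction hm using Submodule.span_induction with
    | mem m hm => exact congrFun hr ⟨m, hm⟩
    | zero => simp
    | add a b _ _ h1 h2 => rw [smul_add, h1, h2, add_zero]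
    | smul e m _ h1 =>
      rw [smul_comm, h1, smul_zero]
  exact isArtinian_of_injective φ hφ

end PC

namespace PC

open scoped TensorProduct

theorem word_tmul {ι D K : Type*} [Ring D] [CommRing K] (d : ι → D) (k : ι → K) (w : List ι) :
    (w.map fun i => (d i ⊗ₜ[ℤ] k i)).prod = (w.map d).prod ⊗ₜ[ℤ] (w.map k).prod := by
  induction w with
  | nil => simp [Algebra.TensorProduct.one_def]
  | cons i w ih => simp [ih]

theorem G_tmul {D K : Type*} [Ring D] [CommRing K] {n : ℕ} (d : Fin n ⊕ Fin n → D)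
    (k : Fin n ⊕ Fin n → K) :
    G n (fun i => (d i ⊗ₜ[ℤ] k i)) = G n d ⊗ₜ[ℤ] (∏ i, k i) := by
  classical
  unfold G wval
  rw [TensorProduct.sum_tmul]
  apply Finset.sum_congr rfl
  intro q hq
  rw [word_tmul]
  obtain ⟨h1, h2⟩ := wd_ok n q hq
  have : ((wd n q).map k).prod = ∏ i, k i := by
    rw [← List.prod_toFinset k h1]
    congr 1
    ext i
    simp [h2 i]
  rw [this, TensorProduct.smul_tmul']

theorem closure_tmul {D K : Type*} [Ring D] [CommRing K] :
    AddSubgroup.closure {x : D ⊗[ℤ] K | ∃ d k, x = d ⊗ₜ[ℤ] k} = ⊤ := by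
  rw [eq_top_iff]
  intro x _
  induction x with
  | zero => exact AddSubgroup.zero_mem _
  | tmul d k => exact AddSubgroup.subset_closure ⟨d, k, rfl⟩
  | add a b h1 h2 => exact AddSubgroup.add_mem _ (h1 trivial) (h2 trivial)

theorem G_tensor {D K : Type*} [Ring D] [CommRing K] {n : ℕ}
    (h : ∀ x y : Fin n ⊕ Fin n → D, G n x * G n y = G n y * G n x)
    (x y : Fin n ⊕ Fin n → D ⊗[ℤ] K) : G n x * G n y = G n y * G n x := by
  classical
  have add1 : ∀ y : D ⊗[ℤ] K, ∀ x : Fin n ⊕ Fin n → D ⊗[ℤ] K, ∀ i u v,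
      G n (Function.update x i (u + v)) * y - y * G n (Function.update x i (u + v)) =
      (G n (Function.update x i u) * y - y * G n (Function.update x i u)) +
      (G n (Function.update x i v) * y - y * G n (Function.update x i v)) := by
    intro y x i u v
    rw [G_add]; noncomm_ring
  have step : ∀ z : D ⊗[ℤ] K, (∀ (d : Fin n ⊕ Fin n → D) (k : Fin n ⊕ Fin n → K),
      G n (fun i => (d i ⊗ₜ[ℤ] k i)) * z = z * G n (fun i => (d i ⊗ₜ[ℤ] k i))) →
      ∀ x, G n x * z = z * G n x := by
    intro z hz x
    rw [← sub_eq_zero]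
    refine coord_ext (fun x => G n x * z - z * G n x) (add1 z) _ closure_tmul ?_ x
    intro x hx
    choose d k hdk using hx
    have : x = fun i => (d i ⊗ₜ[ℤ] k i) := funext hdk
    rw [this, hz, sub_self]
  refine step _ ?_ x
  intro d k
  refine (step _ ?_ y).symm
  intro d' k'
  rw [G_tmul, G_tmul, Algebra.TensorProduct.tmul_mul_tmul, Algebra.TensorProduct.tmul_mul_tmul,
    h, mul_comm (∏ i, k' i)]

/-- Independence over the center versus generalized polynomial identities. -/
theorem gpi {ι D : Type*} [DivisionRing D] (x : ι → D)
    (hx : LinearIndependent (Subring.center D) x) (s : Finset ι) :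
    ∀ y : ι → D, (∀ d, ∑ i ∈ s, x i * d * y i = 0) → ∀ i ∈ s, y i = 0 := by
  classical
  induction s using Finset.induction_on with
  | empty => simp
  | insert j s hj ih =>
    intro y hy
    have hyj : y j = 0 := by
      by_contra hne
      let z : ι → D := fun i => y i * (y j)⁻¹
      have hz : ∀ d, ∑ i ∈ insert j s, x i * d * z i = 0 := by
        intro d
        have := congrArg (· * (y j)⁻¹) (hy d)
        simpa [Finset.sum_mul, mul_assoc, z] using this
      have hzj : z j = 1 := mul_inv_cancel₀ hne
      have hc : ∀ e, ∀ i ∈ s, e * z i - z i * e = 0 := by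
        intro e
        apply ih
        intro d
        have h1 := hz (d * e)
        have h2 := congrArg (· * e) (hz d)
        simp only [Finset.sum_mul, zero_mul] at h2
        rw [Finset.sum_insert hj, hzj] at h1 h2
        have e3 : ∀ i, x i * d * (e * z i - z i * e) =
          x i * (d * e) * z i - x i * d * z i * e := by intro i; noncomm_ring
        simp_rw [e3]
        rw [Finset.sum_sub_distrib]
        have h3 : x j * (d * e) * 1 = x j * d * 1 * e := by noncomm_ring
        rw [h3] at h1
        rw [eq_neg_of_add_eq_zero_right h1, eq_neg_of_add_eq_zero_right h2, sub_self]
      have hmem : ∀ i ∈ insert j s, z i ∈ Subring.center D := by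
        intro i hi
        rw [Subring.mem_center_iff]
        rcases Finset.mem_insert.1 hi with rfl | hi
        · intro g; rw [hzj]; simp
        · intro g; exact sub_eq_zero.1 (hc g i hi)
      let c : ι → Subring.center D := fun i => if h : z i ∈ Subring.center D then ⟨z i, h⟩ else 0
      have hcz : ∀ i ∈ insert j s, ((c i : Subring.center D) : D) = z i := by
        intro i hi
        simp [c, hmem i hi]
      have h4 := linearIndependent_iff'.1 hx (insert j s) c (by
        rw [← hz 1]
        apply Finset.sum_congr rfl
        intro i hi
        rw [mul_one, ← hcz i hi, Subring.smul_def, smul_eq_mul]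
        exact ((Subring.mem_center_iff.1 (c i).2) _).symm) j (Finset.mem_insert_self j s)
      have h5 := hcz j (Finset.mem_insert_self j s)
      rw [h4, hzj] at h5
      simp at h5
    intro i hi
    rcases Finset.mem_insert.1 hi with rfl | hi
    · exact hyj
    · refine ih y ?_ i hi
      intro d
      have := hy d
      rwa [Finset.sum_insert hj, hyj, mul_zero, zero_add] at this

theorem fd_of_span {D K : Type*} [DivisionRing D] [CommRing K] [Nontrivial K] (j : K →+* D)
    (hj : Function.Injective j)
    (m : ℕ) (v : Fin m → D)
    (hv : ∀ d, ∃ k : Fin m → K, d = ∑ i, v i * j (k i)) : Module.Finite (Subring.center D) D := by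
  classical
  by_contra hinf
  let b := Module.Basis.ofVectorSpace (Subring.center D) D
  have : Infinite (Module.Basis.ofVectorSpaceIndex (Subring.center D) D) := by
    by_contra hc
    rw [not_infinite_iff_finite] at hc
    exact hinf (Module.Finite.of_basis b)
  let e := Infinite.natEmbedding (Module.Basis.ofVectorSpaceIndex (Subring.center D) D)
  let x : ℕ → D := fun t => b (e t)
  have hx : LinearIndependent (Subring.center D) x := b.linearIndependent.comp e e.injective
  choose a ha using hv
  let r := m * m + 1
  let φ : (Fin r → K) →ₗ[K] (Fin m × Fin m → K) :=
    LinearMap.pi fun p => ∑ i : Fin r, (a (x i * v p.1) p.2) • LinearMap.proj i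
  have hφ : ¬ Function.Injective φ := by
    intro h
    have := card_le_of_injective K φ h
    simp [r] at this
  rw [injective_iff_map_eq_zero] at hφ
  push Not at hφ
  obtain ⟨k, hk, hk0⟩ := hφ
  apply hk0
  have h1 : ∀ l, ∑ i : Fin r, x i * v l * j (k i) = 0 := by
    intro l
    have h2 : ∀ i : Fin r, x i * v l * j (k i) = ∑ q, v q * j (a (x i * v l) q * k i) := by
      intro i
      conv_lhs => rw [ha (x i * v l)]
      simp [Finset.sum_mul, mul_assoc]
    simp_rw [h2]
    rw [Finset.sum_comm]
    apply Finset.sum_eq_zero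
    intro q _
    rw [← Finset.mul_sum, ← map_sum]
    have h3 := congrFun hk (l, q)
    simp [φ] at h3
    rw [h3]; simp
  have h2 : ∀ d, ∑ i : Fin r, x i * d * j (k i) = 0 := by
    intro d
    have h3 : ∀ i : Fin r, x i * d * j (k i) = ∑ l, x i * v l * j (k i) * j (a d l) := by
      intro i
      conv_lhs => rw [ha d]
      simp only [Finset.mul_sum, Finset.sum_mul, mul_assoc]
      simp only [← map_mul, mul_comm (k i)]
    simp_rw [h3]
    rw [Finset.sum_comm]
    apply Finset.sum_eq_zero
    intro l _
    rw [← Finset.sum_mul, h1, zero_mul]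
  have h3 := gpi (fun i : Fin r => x i) (hx.comp _ Fin.val_injective) Finset.univ
    (fun i => j (k i)) (by simpa using h2)
  funext i
  apply hj
  rw [h3 i (Finset.mem_univ i)]
  simp

theorem G_or_fd_aux {D K : Type*} [DivisionRing D] [CommRing K] [Nontrivial K] (j : K →+* D)
    (hj : Function.Injective j) (hcent : ∀ x, (∀ k, x * j k = j k * x) → ∃ k, j k = x)
    [Module K D] [SMulCommClass D K D] (hsm : ∀ (k : K) (d : D), k • d = d * j k)
    {n : ℕ} (hn : 1 ≤ n) :
    (∃ x y : Fin n ⊕ Fin n → D, G n x * G n y ≠ G n y * G n x) ∨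
      Module.Finite (Subring.center D) D := by
  letI : Module (D ⊗[ℤ] K) D := TensorProduct.Algebra.module
  have act : ∀ (d : D) (k : K) (m : D), (d ⊗ₜ[ℤ] k) • m = d * (m * j k) := by
    intro d k m
    rw [TensorProduct.Algebra.smul_def, hsm, smul_eq_mul]
  haveI : IsSimpleModule (D ⊗[ℤ] K) D := by
    rw [isSimpleModule_iff_toSpanSingleton_surjective]
    refine ⟨inferInstance, fun x hx y => ⟨(y * x⁻¹) ⊗ₜ 1, ?_⟩⟩
    rw [LinearMap.toSpanSingleton_apply, act]
    simp [mul_assoc, hx]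
  by_cases hfin : Module.Finite (Module.End (D ⊗[ℤ] K) D) D
  · right
    have hend : ∀ f : Module.End (D ⊗[ℤ] K) D, ∃ k, ∀ d, f d = d * j k := by
      intro f
      have h1 : ∀ d, f d = d * f 1 := by
        intro d
        have := f.map_smul (d ⊗ₜ[ℤ] (1 : K)) 1
        rw [act, act] at this
        simpa using this
      obtain ⟨k, hk⟩ := hcent (f 1) (by
        intro k
        have := f.map_smul ((1 : D) ⊗ₜ[ℤ] k) 1
        rw [act, act] at this
        simp at this
        rw [← this, h1])
      exact ⟨k, fun d => by rw [h1, hk]⟩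
    obtain ⟨m, v, hv⟩ := Module.Finite.exists_fin (R := Module.End (D ⊗[ℤ] K) D) (M := D)
    refine fd_of_span j hj m v ?_
    intro d
    have hd : d ∈ Submodule.span (Module.End (D ⊗[ℤ] K) D) (Set.range v) := by rw [hv]; trivial
    rw [Submodule.mem_span_range_iff_exists_fun] at hd
    obtain ⟨c, hc⟩ := hd
    choose k hk using fun i => hend (c i)
    refine ⟨k, ?_⟩
    rw [← hc]
    apply Finset.sum_congr rfl
    intro i _
    exact hk i (v i)
  · left
    by_contra! hc
    obtain ⟨x, y, hxy⟩ := density_G hfin hn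
    exact hxy (G_tensor hc x y)

theorem exists_max_comm (D : Type*) [Ring D] :
    ∃ S : Set D, S = S.centralizer := by
  obtain ⟨S, hS⟩ := zorn_subset {S : Set D | S ⊆ S.centralizer} (by
    intro c hc hchain
    refine ⟨⋃₀ c, ?_, fun s hs => Set.subset_sUnion_of_mem hs⟩
    rintro x ⟨s, hs, hx⟩ y ⟨t, ht, hy⟩
    rcases hchain.total hs ht with h | h
    · exact hc ht (h hx) y hy
    · exact hc hs hx y (h hy))
  refine ⟨S, Set.Subset.antisymm hS.1 ?_⟩
  intro x hx
  have h1 : insert x S ∈ {S : Set D | S ⊆ S.centralizer} := by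
    rintro a (rfl | ha) b (rfl | hb)
    · rfl
    · exact hx b hb
    · exact (hx a ha).symm
    · exact hS.1 ha b hb
  exact hS.2 h1 (Set.subset_insert _ _) (Set.mem_insert _ _)

theorem G_or_fd (D : Type*) [DivisionRing D] {n : ℕ} (hn : 1 ≤ n) :
    (∃ x y : Fin n ⊕ Fin n → D, G n x * G n y ≠ G n y * G n x) ∨
      Module.Finite (Subring.center D) D := by
  obtain ⟨S, hS⟩ := exists_max_comm D
  let K := Subring.centralizer S
  have hK : ∀ x, x ∈ K ↔ x ∈ S := by
    intro x
    have h := Set.ext_iff.1 hS x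
    exact h.symm
  have hcomm : ∀ a b : K, a * b = b * a := by
    intro a b
    ext
    exact b.2 a.1 ((hK _).1 a.2)
  letI : CommRing K := { (inferInstance : Ring K) with mul_comm := hcomm }
  let j : K →+* D := K.subtype
  letI : Module K D := Module.compHom D (j.toOpposite fun x y => by
    show j x * j y = j y * j x
    rw [← map_mul, hcomm, map_mul])
  have hsm : ∀ (k : K) (d : D), k • d = d * j k := fun k d => rfl
  haveI : SMulCommClass D K D := ⟨fun a k d => by
    rw [hsm, hsm]; simp [mul_assoc]⟩
  refine G_or_fd_aux j Subtype.val_injective ?_ hsm hn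
  intro x hx
  refine ⟨⟨x, ?_⟩, rfl⟩
  intro s hs
  exact (hx ⟨s, (hK s).2 hs⟩).symm

end PC

namespace PC

/-- the monomial vector -/
def mvec {ι Z : Type*} [Field Z] (e : ι → ℕ × ℕ) : Z × Z →* (ι → Z) where
  toFun p β := p.1 ^ (e β).1 * p.2 ^ (e β).2
  map_one' := by funext; simp
  map_mul' p q := by funext; simp [mul_pow]; ring

theorem extract {ι Z M : Type*} [DecidableEq ι] [Field Z] [Infinite Z] [AddCommGroup M] [Module Z M]
    (V : AddSubgroup M) {n : ℕ} (I : Finset ι) (e : ι → ℕ × ℕ) (τ : ι)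
    (hτ : τ ∈ I) (heτ : e τ = (1, n)) (he : ∀ β ∈ I, β ≠ τ → e β ≠ e τ)
    (h1 : ∀ β ∈ I, 1 ≤ (e β).1 + (e β).2) (h2 : ∀ β ∈ I, (e β).1 + (e β).2 ≤ n + 1)
    (v : ι → M) (hV : ∀ c d : Z, ∑ β ∈ I, (c ^ (e β).1 * d ^ (e β).2) • v β ∈ V) (ζ : Z) :
    ζ • v τ ∈ V := by
  let m := mvec (Z := Z) e
  have hm : ∀ c d β, m (c, d) β = c ^ (e β).1 * d ^ (e β).2 := fun c d β => rfl
  let A : Subring (ι → Z) := Subring.closure (MonoidHom.mrange m : Set (ι → Z))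
  have hmA : ∀ p, m p ∈ A := fun p => Subring.subset_closure ⟨p, rfl⟩
  have hA : ∀ f ∈ A, ∑ β ∈ I, f β • v β ∈ V := by
    intro f hf
    rw [Subring.mem_closure_iff, Submonoid.closure_eq] at hf
    induction hf using AddSubgroup.closure_induction with
    | mem f hf => obtain ⟨⟨c, d⟩, rfl⟩ := hf; exact hV c d
    | zero => simp
    | add f g _ _ hf hg =>
      simp only [Pi.add_apply, add_smul, Finset.sum_add_distrib]
      exact V.add_mem hf hg
    | neg f _ hf =>
      simp only [Pi.neg_apply, neg_smul, Finset.sum_neg_distrib]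
      exact V.neg_mem hf
  have key : ∀ β ∈ I, β ≠ τ → ∃ f ∈ A, f τ = 1 ∧ f β = 0 := by
    intro β hβ hne
    obtain ⟨d, hd⟩ : ∃ d : Z, d ^ (e β).2 ≠ d ^ (n * (e β).1) := by
      by_contra! hc
      have hp : (Polynomial.X ^ (e β).2 : Polynomial Z) = Polynomial.X ^ (n * (e β).1) :=
        Polynomial.funext fun d => by simpa using hc d
      have hp2 := congrArg Polynomial.natDegree hp
      simp only [Polynomial.natDegree_X_pow] at hp2
      have a1 := h1 β hβ
      have a2 := h2 β hβ
      apply he β hβ hne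
      rw [heτ]
      have h3 : (e β).1 = 1 := by
        rw [hp2] at a1 a2
        rcases Nat.lt_trichotomy (e β).1 1 with h | h | h
        · have : (e β).1 = 0 := by omega
          rw [this] at a1; simp at a1
        · exact h
        · exfalso
          nlinarith
      apply Prod.ext
      · exact h3
      · rw [hp2, h3, mul_one]
    let x : ι → Z := m (1, d) - m (d ^ n, 1)
    have hx : x ∈ A := A.sub_mem (hmA _) (hmA _)
    have hxτ : x τ = 0 := by simp [x, hm, heτ]
    have hxβ : x β ≠ 0 := by
      simp only [x, Pi.sub_apply, hm, one_pow, one_mul, mul_one, ← pow_mul]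
      exact sub_ne_zero.2 hd
    by_cases hi : (e β).1 = 0
    · have hj : (e β).2 ≠ 0 := by have := h1 β hβ; omega
      refine ⟨1 - x ^ (e β).2 * m (1, (x β)⁻¹),
        A.sub_mem A.one_mem (A.mul_mem (A.pow_mem hx _) (hmA _)), ?_, ?_⟩
      · simp [hxτ, hj]
      · simp [hm, hxβ]
    · refine ⟨1 - x ^ (e β).1 * m ((x β)⁻¹, 1),
        A.sub_mem A.one_mem (A.mul_mem (A.pow_mem hx _) (hmA _)), ?_, ?_⟩
      · simp [hxτ, hi]
      · simp [hm, hxβ]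
  choose! f hfA hfτ hfβ using key
  let F : ι → Z := m (ζ, 1) * ∏ β ∈ I.erase τ, f β
  have hF : F ∈ A := A.mul_mem (hmA _) (A.prod_mem fun β hβ =>
    hfA β (Finset.mem_of_mem_erase hβ) (Finset.ne_of_mem_erase hβ))
  have h := hA F hF
  rw [Finset.sum_eq_single τ] at h
  · have : F τ = ζ := by
      simp only [F, Pi.mul_apply, Finset.prod_apply, hm, heτ]
      rw [Finset.prod_eq_one]
      · simp
      · intro β hβ
        exact hfτ β (Finset.mem_of_mem_erase hβ) (Finset.ne_of_mem_erase hβ)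
    rwa [this] at h
  · intro β hβ hne
    have : F β = 0 := by
      simp only [F, Pi.mul_apply, Finset.prod_apply]
      rw [Finset.prod_eq_zero (f := fun c => f c β) (Finset.mem_erase.2 ⟨hne, hβ⟩) (hfβ β hβ hne),
        mul_zero]
    rw [this, zero_smul]
  · exact fun h => absurd hτ h

/-- sum of all words with `i` letters `z` and `j` letters `y` -/
def sh {D : Type*} [Ring D] (y z : D) : ℕ → ℕ → D
  | 0, 0 => 1
  | 0, j + 1 => y * sh y z 0 j
  | i + 1, 0 => z * sh y z i 0
  | i + 1, j + 1 => z * sh y z i (j + 1) + y * sh y z (i + 1) j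

theorem sh_zero {D : Type*} [Ring D] (y z : D) (j : ℕ) : sh y z 0 j = y ^ j := by
  induction j with
  | zero => simp [sh]
  | succ j ih => rw [sh, ih, pow_succ']

theorem sh_comm {D : Type*} [Ring D] (y z : D) (j : ℕ) :
    y * sh y z 1 j - sh y z 1 j * y = y ^ (j + 1) * z - z * y ^ (j + 1) := by
  induction j with
  | zero => simp [sh]
  | succ j ih =>
    have e : sh y z 1 (j + 1) = z * y ^ (j + 1) + y * sh y z 1 j := by
      rw [← sh_zero y z (j + 1)]
      exact sh.eq_4 y z 0 j
    rw [e]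
    have : y * (z * y ^ (j + 1) + y * sh y z 1 j) - (z * y ^ (j + 1) + y * sh y z 1 j) * y =
      y * z * y ^ (j + 1) - z * (y ^ (j + 1) * y) + y * (y * sh y z 1 j - sh y z 1 j * y) := by
      noncomm_ring
    rw [this, ih, ← pow_succ, mul_sub, pow_succ' y (j + 1)]
    noncomm_ring

theorem sh_expand {Z D : Type*} [Field Z] [Ring D] [Algebra Z D] (y z : D) (c d : Z) (k : ℕ) :
    (d • y + c • z) ^ k = ∑ p ∈ Finset.HasAntidiagonal.antidiagonal k, (c ^ p.1 * d ^ p.2) • sh y z p.1 p.2 := by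
  induction k with
  | zero => simp [sh]
  | succ k ih =>
    let a : ℕ × ℕ → D := fun p => match p with
      | (0, _) => 0
      | (i + 1, j) => z * sh y z i j
    let b : ℕ × ℕ → D := fun p => match p with
      | (_, 0) => 0
      | (i, j + 1) => y * sh y z i j
    have hab : ∀ p ∈ Finset.HasAntidiagonal.antidiagonal (k + 1), sh y z p.1 p.2 = a p + b p := by
      rintro ⟨i, j⟩ hp
      rw [Finset.HasAntidiagonal.mem_antidiagonal] at hp
      rcases i with _ | i <;> rcases j with _ | j
      · simp at hp
      · simp [a, b, sh]
      · simp [a, b, sh]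
      · simp [a, b, sh]
    have e : ∑ p ∈ Finset.HasAntidiagonal.antidiagonal (k + 1), (c ^ p.1 * d ^ p.2) • sh y z p.1 p.2 =
        ∑ p ∈ Finset.HasAntidiagonal.antidiagonal (k + 1), (c ^ p.1 * d ^ p.2) • a p +
        ∑ p ∈ Finset.HasAntidiagonal.antidiagonal (k + 1), (c ^ p.1 * d ^ p.2) • b p := by
      rw [← Finset.sum_add_distrib]
      apply Finset.sum_congr rfl
      intro p hp
      rw [hab p hp, smul_add]
    rw [e, Finset.Nat.sum_antidiagonal_succ, Finset.Nat.sum_antidiagonal_succ', pow_succ', ih,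
      add_mul, Finset.mul_sum, Finset.mul_sum]
    simp only [a, b, smul_zero, zero_add]
    rw [add_comm]
    congr 1
    · apply Finset.sum_congr rfl
      rintro p -
      rw [smul_mul_smul_comm]; congr 1; ring
    · apply Finset.sum_congr rfl
      rintro p -
      rw [smul_mul_smul_comm]; congr 1; ring

end PC

namespace PC

variable {D : Type*} [DivisionRing D]



theorem zsmul_def' (ζ : (Subring.center D)) (x : D) : ζ • x = (ζ : D) * x := rfl

theorem z_comm (ζ : (Subring.center D)) (x : D) : (ζ : D) * x = x * (ζ : D) :=
  ((Subring.mem_center_iff.1 ζ.2) x).symm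

theorem P_conj {R : Type*} [DivisionRing R] (γ : ℕ → R) (n : ℕ) (hγ : ∀ i x, γ i * x = x * γ i)
    {a : R} (ha : a ≠ 0) (x : R) : P γ n (a⁻¹ * x * a) = a⁻¹ * P γ n x * a := by
  unfold P
  rw [Finset.mul_sum, Finset.sum_mul]
  apply Finset.sum_congr rfl
  intro i hi
  clear hi
  have : (a⁻¹ * x * a) ^ i = a⁻¹ * x ^ i * a := by
    induction i with
    | zero => simp [ha]
    | succ i ih =>
      rw [pow_succ, ih, pow_succ]
      simp only [mul_assoc]
      rw [mul_inv_cancel_left₀ ha]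
  rw [this, ← mul_assoc, ← mul_assoc, hγ, mul_assoc a⁻¹]

theorem V_conj (γ : ℕ → D) (n : ℕ) (hγ : ∀ i x, γ i * x = x * γ i)
    {a : D} (ha : a ≠ 0) {x : D} (hx : x ∈ V γ n) : a⁻¹ * x * a ∈ V γ n := by
  unfold V at hx
  induction hx using AddSubgroup.closure_induction with
  | mem x hx =>
    obtain ⟨u, v, rfl⟩ := hx
    have : a⁻¹ * (P γ n (u * v) - P γ n (v * u)) * a =
      P γ n ((a⁻¹ * u * a) * (a⁻¹ * v * a)) - P γ n ((a⁻¹ * v * a) * (a⁻¹ * u * a)) := by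
      have e : ∀ u v : D, (a⁻¹ * u * a) * (a⁻¹ * v * a) = a⁻¹ * (u * v) * a := by
        intro u v
        simp only [mul_assoc]
        rw [mul_inv_cancel_left₀ ha]
      rw [e, e, P_conj γ n hγ ha, P_conj γ n hγ ha]
      noncomm_ring
    rw [this]
    exact AddSubgroup.subset_closure ⟨_, _, rfl⟩
  | zero => simp
  | add u v _ _ h1 h2 => rw [mul_add, add_mul]; exact AddSubgroup.add_mem _ h1 h2
  | neg u _ h1 => rw [mul_neg, neg_mul]; exact AddSubgroup.neg_mem _ h1

theorem P_conj_mem (γ : ℕ → D) (n : ℕ) (hγ : ∀ i x, γ i * x = x * γ i)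
    {a : D} (ha : a ≠ 0) (x : D) : P γ n x - a⁻¹ * P γ n x * a ∈ V γ n := by
  rw [← P_conj γ n hγ ha]
  refine AddSubgroup.subset_closure ⟨a, a⁻¹ * x, ?_⟩
  rw [mul_inv_cancel_left₀ ha]

theorem step1 [Infinite (Subring.center D)] (γ : ℕ → D) (n : ℕ) (hγ : ∀ i x, γ i * x = x * γ i)
    (hu : γ (n + 1) ≠ 0) {a : D} (ha : a ≠ 0) (y z : D) (ζ : (Subring.center D)) :
    ζ • (sh y z 1 n - a⁻¹ * sh y z 1 n * a) ∈ V γ (n + 1) := by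
  classical
  let δ : D →ₗ[(Subring.center D)] D :=
    { toFun := fun x => x - a⁻¹ * x * a
      map_add' := by intro x y; noncomm_ring
      map_smul' := by
        intro ζ x
        simp only [zsmul_def', RingHom.id_apply]
        rw [mul_sub, ← mul_assoc a⁻¹, ← z_comm]
        simp only [mul_assoc] }
  have hδ : ∀ x, δ x = x - a⁻¹ * x * a := fun x => rfl
  let I : Finset (Σ _ : ℕ, ℕ × ℕ) := (Finset.Icc 1 (n + 1)).sigma
    fun k => Finset.HasAntidiagonal.antidiagonal k
  let v : (Σ _ : ℕ, ℕ × ℕ) → D := fun β => δ (γ β.1 * sh y z β.2.1 β.2.2)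
  have hI : ∀ β ∈ I, β.2.1 + β.2.2 = β.1 ∧ 1 ≤ β.1 ∧ β.1 ≤ n + 1 := by
    rintro ⟨k, i, j⟩ hβ
    simp only [I, Finset.mem_sigma, Finset.mem_Icc, Finset.HasAntidiagonal.mem_antidiagonal] at hβ
    exact ⟨hβ.2, hβ.1.1, hβ.1.2⟩
  have main := extract (Z := (Subring.center D)) (V γ (n + 1)) (n := n) I (fun β => β.2) ⟨n + 1, (1, n)⟩
    (by simp [I, add_comm]) rfl
    (by
      rintro ⟨k, p⟩ hβ hne h
      apply hne
      have := (hI _ hβ).1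
      simp only at h this
      subst h
      simp only at this
      subst this
      rw [add_comm])
    (by intro β hβ; have := hI β hβ; omega)
    (by intro β hβ; have := hI β hβ; omega) v (by
      intro c d
      have h := P_conj_mem γ (n + 1) hγ ha (d • y + c • z)
      have e : P γ (n + 1) (d • y + c • z) - a⁻¹ * P γ (n + 1) (d • y + c • z) * a =
        δ (P γ (n + 1) (d • y + c • z)) := rfl
      rw [e] at h
      convert h using 1
      unfold P
      rw [Finset.range_eq_Ico, Finset.sum_eq_sum_Ico_succ_bot (by omega), map_add]
      have e0 : δ (γ 0 * (d • y + c • z) ^ 0) = 0 := by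
        rw [hδ, pow_zero, mul_one, ← hγ, mul_assoc, inv_mul_cancel₀ ha, mul_one, sub_self]
      rw [e0, zero_add, Finset.sum_sigma, map_sum]
      apply Finset.sum_congr rfl
      intro k _
      rw [sh_expand, Finset.mul_sum, map_sum]
      apply Finset.sum_congr rfl
      intro p _
      rw [← map_smul]
      congr 1
      rw [mul_smul_comm])
  have hmem : (γ (n + 1))⁻¹ ∈ (Subring.center D) := by
    rw [Subring.mem_center_iff]
    intro g
    have := hγ (n + 1) g
    rw [mul_inv_eq_iff_eq_mul₀ hu, mul_assoc, ← this, inv_mul_cancel_left₀ hu]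
  have := main (ζ * ⟨_, hmem⟩)
  convert this using 1
  simp only [v]
  have e : δ (γ (n + 1) * sh y z 1 n) = γ (n + 1) * δ (sh y z 1 n) := by
    rw [hδ, hδ, mul_sub, ← mul_assoc a⁻¹, ← hγ]
    simp only [mul_assoc]
  rw [e, mul_smul]
  congr 1
  rw [zsmul_def']
  simp only
  rw [inv_mul_cancel_left₀ hu]
  rfl

theorem surj_of_fd [Module.Finite (Subring.center D) D] (U : Submodule (Subring.center D) D) {b : D} (hb : b ≠ 0)
    (h : ∀ u ∈ U, b * u ∈ U) {u : D} (hu : u ∈ U) : ∃ u' ∈ U, b * u' = u := by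
  let f : U →ₗ[(Subring.center D)] U := (LinearMap.mulLeft (Subring.center D) b).restrict h
  have hf : Function.Injective f := by
    intro x y hxy
    have : b * (x : D) = b * (y : D) := congrArg Subtype.val hxy
    exact Subtype.ext (mul_left_cancel₀ hb this)
  obtain ⟨u', hu'⟩ := LinearMap.surjective_of_injective hf ⟨u, hu⟩
  exact ⟨u', u'.2, congrArg Subtype.val hu'⟩

theorem one_mem_span [Infinite (Subring.center D)] [Module.Finite (Subring.center D) D] {a : D} (ha : a ∉ (Subring.center D)) :
    (1 : D) ∈ Submodule.span (Subring.center D) (Set.range fun c : (Subring.center D) => (a + c)⁻¹) := by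
  classical
  have hne : ∀ c : (Subring.center D), a + c ≠ 0 := by
    intro c h
    apply ha
    rw [eq_neg_of_add_eq_zero_left h]
    exact Subring.neg_mem _ c.2
  have hinj : Function.Injective fun c : (Subring.center D) => (a + (c : D))⁻¹ := by
    intro c d h
    have := inv_injective h
    exact Subtype.ext (add_left_cancel this)
  have hfg : (Submodule.span (Subring.center D) (Set.range fun c : (Subring.center D) => (a + (c : D))⁻¹)).FG :=
    IsNoetherian.noetherian _
  obtain ⟨s, hs, hspan⟩ := Submodule.fg_span_iff_fg_span_finset_subset _ |>.1 hfg
  obtain ⟨_, ⟨c', rfl⟩, hc'⟩ := (Set.infinite_range_of_injective hinj).exists_notMem_finset s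
  simp only at hc'
  rw [hspan]
  have hcU : (a + (c' : D))⁻¹ ∈ Submodule.span (Subring.center D) (s : Set D) := by
    rw [← hspan]; exact Submodule.subset_span ⟨c', rfl⟩
  obtain ⟨u, hu, e⟩ := surj_of_fd (Submodule.span (Subring.center D) (s : Set D)) (inv_ne_zero (hne c'))
    (by
      intro u hu
      induction hu using Submodule.span_induction with
      | mem u hu =>
        obtain ⟨c, rfl⟩ := hs hu
        simp only at hu ⊢
        have hcc : c - c' ≠ 0 := by
          intro h
          rw [sub_eq_zero] at h
          subst h
          exact hc' hu
        have e : (a + (c' : D))⁻¹ * (a + (c : D))⁻¹ =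
            (c - c')⁻¹ • ((a + (c' : D))⁻¹ - (a + (c : D))⁻¹) := by
          rw [eq_inv_smul_iff₀ hcc, zsmul_def', inv_sub_inv' (hne c') (hne c), ← mul_assoc, z_comm]
          congr 1
          congr 1
          simp
        rw [e]
        exact Submodule.smul_mem _ _ (Submodule.sub_mem _ hcU (Submodule.subset_span hu))
      | zero => simp
      | add x y _ _ h1 h2 => rw [mul_add]; exact Submodule.add_mem _ h1 h2
      | smul c x _ h1 => rw [mul_smul_comm]; exact Submodule.smul_mem _ _ h1) hcU
  have : u = 1 := by
    apply mul_left_cancel₀ (inv_ne_zero (hne c'))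
    rw [e, mul_one]
  rwa [this] at hu

theorem step2 [Infinite (Subring.center D)] [Module.Finite (Subring.center D) D] (γ : ℕ → D) (n : ℕ)
    (hγ : ∀ i x, γ i * x = x * γ i)
    (hu : γ (n + 1) ≠ 0) (y z : D) : sh y z 1 n ∈ comSub (V γ (n + 1)) := by
  rw [mem_comSub]
  intro a
  set w := sh y z 1 n with hw
  suffices h : a * w - w * a ∈ V γ (n + 1) by
    have := AddSubgroup.neg_mem _ h
    rwa [neg_sub] at this
  by_cases ha : a ∈ (Subring.center D)
  · rw [Subring.mem_center_iff.1 ha w, sub_self]; exact AddSubgroup.zero_mem _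
  have hne : ∀ c : (Subring.center D), a + c ≠ 0 := by
    intro c h
    apply ha
    rw [eq_neg_of_add_eq_zero_left h]
    exact Subring.neg_mem _ c.2
  have key : ∀ x ∈ Submodule.span (Subring.center D) (Set.range fun c : (Subring.center D) => (a + (c : D))⁻¹), ∀ ζ : (Subring.center D),
      ζ • (x * (a * w - w * a)) ∈ V γ (n + 1) := by
    intro x hx
    induction hx using Submodule.span_induction with
    | mem u hu' =>
      obtain ⟨c, rfl⟩ := hu'
      intro ζ
      have := step1 γ n hγ hu (hne c) y z ζ
      rw [← hw] at this
      convert this using 2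
      simp only
      rw [eq_comm, sub_eq_iff_eq_add, mul_assoc, ← mul_add, eq_inv_mul_iff_mul_eq₀ (hne c), mul_add,
        add_mul, z_comm]
      noncomm_ring
    | zero => simp
    | add x y _ _ h1 h2 =>
      intro ζ
      rw [add_mul, smul_add]; exact AddSubgroup.add_mem _ (h1 ζ) (h2 ζ)
    | smul c x _ h1 =>
      intro ζ
      rw [smul_mul_assoc, ← mul_smul]; exact h1 _
  have := key 1 (one_mem_span ha) 1
  simpa using this

theorem cbh [Module.Finite (Subring.center D) D] (T : Subring D) (hZ : (Subring.center D) ≤ T)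
    (hc : ∀ a, a ≠ 0 → ∀ x ∈ T, a⁻¹ * x * a ∈ T) (hT : T ≠ ⊤) : T ≤ (Subring.center D) := by
  let U : Submodule (Subring.center D) D :=
    { carrier := T
      add_mem' := fun h1 h2 => T.add_mem h1 h2
      zero_mem' := T.zero_mem
      smul_mem' := fun c x hx => T.mul_mem (hZ c.2) hx }
  have hinv : ∀ x ∈ T, x⁻¹ ∈ T := by
    intro x hx
    by_cases h0 : x = 0
    · simp [h0, T.zero_mem]
    obtain ⟨u, hu, e⟩ := surj_of_fd U h0 (fun u hu => T.mul_mem hx hu) (u := 1) T.one_mem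
    rw [inv_eq_of_mul_eq_one_right e]
    exact hu
  have key : ∀ u, u ∉ T → ∀ x ∈ T, u * x = x * u := by
    intro u hu x hx
    have hu0 : u ≠ 0 := fun h => hu (h ▸ T.zero_mem)
    have hu1 : 1 + u ≠ 0 := fun h => hu (by
      rw [eq_neg_of_add_eq_zero_right h]; exact T.neg_mem T.one_mem)
    have c1 := hc u⁻¹ (inv_ne_zero hu0) x hx
    have c2 := hc (1 + u)⁻¹ (inv_ne_zero hu1) x hx
    rw [inv_inv] at c1 c2
    obtain ⟨x1, h1⟩ : ∃ x1, x1 = u * x * u⁻¹ := ⟨_, rfl⟩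
    obtain ⟨x2, h2⟩ : ∃ x2, x2 = (1 + u) * x * (1 + u)⁻¹ := ⟨_, rfl⟩
    rw [← h1] at c1
    rw [← h2] at c2
    rw [eq_mul_inv_iff_mul_eq₀ hu0] at h1
    rw [eq_mul_inv_iff_mul_eq₀ hu1] at h2
    have h3 : (x1 - x2) * u = x2 - x := by
      have : x2 + x2 * u = x + x1 * u := by
        rw [h1]
        have := h2
        rw [mul_add, mul_one, add_mul, one_mul] at this
        exact this
      rw [sub_mul, sub_eq_sub_iff_add_eq_add, this, add_comm]
    by_cases h4 : x1 - x2 = 0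
    · rw [h4, zero_mul] at h3
      have e1 : x2 = x := (sub_eq_zero.1 h3.symm)
      have e2 : x1 = x := (sub_eq_zero.1 h4).trans e1
      rw [← h1, e2]
    · exfalso
      apply hu
      have : u = (x1 - x2)⁻¹ * (x2 - x) := by rw [← h3, inv_mul_cancel_left₀ h4]
      rw [this]
      exact T.mul_mem (hinv _ (T.sub_mem c1 c2)) (T.sub_mem c2 hx)
  obtain ⟨v, hv⟩ : ∃ v, v ∉ T := by
    by_contra! h
    exact hT (eq_top_iff.2 fun x _ => h x)
  intro x hx
  rw [Subring.mem_center_iff]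
  intro u
  by_cases hu : u ∈ T
  · have h1 := key (u + v) (fun h => hv (by simpa using T.sub_mem h hu)) x hx
    have h2 := key v hv x hx
    rw [add_mul, mul_add, h2] at h1
    exact add_right_cancel h1
  · exact key u hu x hx

theorem no_pow_central [Infinite (Subring.center D)] [Module.Finite (Subring.center D) D] (hnc : (Subring.center D) ≠ ⊤) {n : ℕ} (hn : 1 ≤ n)
    (h : ∀ y : D, y ^ n ∈ (Subring.center D)) : False := by
  haveI : Algebra.IsAlgebraic (Subring.center D) D := Algebra.IsAlgebraic.of_finite _ _
  obtain ⟨x, hx, hsep⟩ := JacobsonNoether.exists_separable_and_not_isCentral D hnc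
  have hInt : IsIntegral (Subring.center D) x := IsIntegral.of_finite _ _
  let Ω := AlgebraicClosure (Subring.center D)
  have hcard : 2 ≤ (minpoly (Subring.center D) x).natDegree := by
    rw [minpoly.two_le_natDegree_iff hInt]
    rintro ⟨c, rfl⟩
    exact hx c.2
  have hroots := Polynomial.card_rootSet_eq_natDegree (K := Ω) hsep (IsAlgClosed.splits _)
  have : 1 < Fintype.card ((minpoly (Subring.center D) x).rootSet Ω) := by omega
  obtain ⟨⟨α, hα⟩, ⟨β, hβ⟩, hne⟩ := Fintype.one_lt_card_iff.1 this
  apply hne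
  rw [Subtype.mk.injEq]
  have hroot : ∀ α ∈ (minpoly (Subring.center D) x).rootSet Ω, ∀ c : (Subring.center D),
      (α + algebraMap (Subring.center D) Ω c) ^ n = algebraMap (Subring.center D) Ω ⟨(x + c) ^ n, h _⟩ := by
    intro α hα c
    have hd : minpoly (Subring.center D) x ∣ (Polynomial.X + Polynomial.C c) ^ n -
        Polynomial.C (⟨(x + c) ^ n, h _⟩ : (Subring.center D)) := by
      apply minpoly.dvd
      simp only [map_sub, map_pow, map_add, Polynomial.aeval_X, Polynomial.aeval_C]
      exact sub_self _
    obtain ⟨q, hq⟩ := hd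
    have := congrArg (Polynomial.aeval α) hq
    rw [map_mul, (Polynomial.mem_rootSet.1 hα).2, zero_mul] at this
    simp only [map_sub, map_pow, map_add, Polynomial.aeval_X, Polynomial.aeval_C] at this
    exact sub_eq_zero.1 this
  have hpoly : (Polynomial.C α + Polynomial.X) ^ n = (Polynomial.C β + Polynomial.X) ^ n := by
    apply Polynomial.eq_of_infinite_eval_eq
    apply (Set.infinite_range_of_injective (algebraMap (Subring.center D) Ω).injective).mono
    rintro _ ⟨c, rfl⟩
    simp [hroot α hα c, hroot β hβ c]
  have := congrArg (Polynomial.eval (-α)) hpoly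
  simp only [Polynomial.eval_pow, Polynomial.eval_add, Polynomial.eval_C, Polynomial.eval_X,
    add_neg_cancel] at this
  rw [zero_pow (by omega)] at this
  have := pow_eq_zero_iff (by omega) |>.1 this.symm
  exact (sub_eq_zero.1 (by rwa [sub_eq_add_neg])).symm

theorem A_fd [Infinite D] [Module.Finite (Subring.center D) D] (hnc : ∃ a b : D, a * b ≠ b * a)
    (γ : ℕ → D) (n : ℕ) (hn : 1 ≤ n)
    (hγ : ∀ i x, γ i * x = x * γ i) (hu : γ n ≠ 0) (a b : D) : a * b - b * a ∈ V γ n := by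
  haveI : Infinite (Subring.center D) := by
    by_contra hc
    rw [not_infinite_iff_finite] at hc
    have : Finite D := Module.finite_of_finite (Subring.center D)
    exact not_finite D
  obtain ⟨n, rfl⟩ : ∃ m, n = m + 1 := ⟨n - 1, by omega⟩
  by_cases hT : comSub (V γ (n + 1)) = ⊤
  · have : a ∈ comSub (V γ (n + 1)) := by rw [hT]; trivial
    exact this b
  exfalso
  have hle := cbh (comSub (V γ (n + 1))) (by
    intro c hc r
    rw [Subring.mem_center_iff.1 hc r, sub_self]; exact AddSubgroup.zero_mem _) (by
    intro a ha x hx r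
    have := V_conj γ (n + 1) hγ ha (hx (a * r * a⁻¹))
    convert this using 1
    rw [mul_sub, sub_mul]
    congr 1
    · simp only [mul_assoc, inv_mul_cancel₀ ha, mul_one]
    · simp only [mul_assoc, inv_mul_cancel_left₀ ha]) hT
  refine no_pow_central (D := D) ?_ (n := n + 1) (by omega) ?_
  · intro h
    obtain ⟨a, b, hab⟩ := hnc
    apply hab
    have : b ∈ (Subring.center D) := by rw [h]; trivial
    exact Subring.mem_center_iff.1 this a
  · intro y
    rw [Subring.mem_center_iff]
    intro z
    have h1 := hle (step2 γ n hγ hu y z)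
    have h2 := sh_comm y z n
    rw [Subring.mem_center_iff.1 h1 y, sub_self] at h2
    exact (sub_eq_zero.1 h2.symm).symm

end PC

namespace PC

/-- Conclusion for a given ring. -/
def Good (R : Type*) [Ring R] (n : ℕ) : Prop :=
  (∀ γ : ℕ → R, (∀ i x, γ i * x = x * γ i) → IsUnit (γ n) → ∀ a b, a * b - b * a ∈ V γ n) ∧
  ∃ a b c d : R, (a * b - b * a) * (c * d - d * c) ≠ (c * d - d * c) * (a * b - b * a)

theorem good_of_G {R : Type*} [Ring R] [IsSimpleRing R] {n : ℕ} {x y : Fin n ⊕ Fin n → R}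
    (hxy : G n x * G n y ≠ G n y * G n x) : Good R n :=
  ⟨fun γ hγ hu => comm_mem_of_G γ n (hγ n) hu x y hxy, B_of_G hxy⟩

theorem B_div {D : Type*} [DivisionRing D] (hnc : ∃ a b : D, a * b ≠ b * a) :
    ∃ a b c d : D, (a * b - b * a) * (c * d - d * c) ≠ (c * d - d * c) * (a * b - b * a) := by
  by_contra! hc
  obtain ⟨x, y, hxy⟩ := hnc
  have key : ∀ x y : D, (x * y - y * x) * x = x * (x * y - y * x) := by
    intro x y
    by_cases h0 : x * y - y * x = 0
    · simp [h0]
    have h1 := hc x y x (y * x)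
    have e : x * (y * x) - y * x * x = (x * y - y * x) * x := by noncomm_ring
    rw [e, mul_assoc (x * y - y * x) x] at h1
    exact mul_left_cancel₀ h0 h1
  have h0 : x * y - y * x ≠ 0 := sub_ne_zero.2 hxy
  obtain ⟨c, hcd⟩ : ∃ c, c = x * y - y * x := ⟨_, rfl⟩
  have hx : c * x = x * c := by rw [hcd]; exact key x y
  have hy : c * y = y * c := by
    have := key y x
    have e : y * x - x * y = -c := by rw [hcd]; noncomm_ring
    rw [e, neg_mul, mul_neg, neg_inj] at this
    exact this
  have e : x * (y * x) - y * x * x = c * x := by rw [hcd]; noncomm_ring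
  have e2 : y * x * x - x * (y * x) = -(c * x) := by rw [← e]; noncomm_ring
  have h3 := key (y * x) x
  rw [e2, neg_mul, mul_neg, neg_inj] at h3
  have h4 : c * (x * (y * x)) = c * (y * (x * x)) := by
    calc c * (x * (y * x)) = c * x * (y * x) := by rw [mul_assoc]
      _ = y * x * (c * x) := h3
      _ = y * (x * c) * x := by simp only [mul_assoc]
      _ = y * (c * x) * x := by rw [hx]
      _ = (y * c) * x * x := by simp only [mul_assoc]
      _ = (c * y) * x * x := by rw [hy]
      _ = _ := by simp only [mul_assoc]
  have hc0 : c ≠ 0 := hcd ▸ h0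
  have h5 := mul_left_cancel₀ hc0 h4
  have hx0 : x ≠ 0 := by
    rintro rfl
    simp at hxy
  rw [← mul_assoc, ← mul_assoc] at h5
  exact hxy (mul_right_cancel₀ hx0 h5)

theorem good_div {D : Type*} [DivisionRing D] [Infinite D] (hnc : ∃ a b : D, a * b ≠ b * a)
    {n : ℕ} (hn : 1 ≤ n) : Good D n := by
  rcases G_or_fd D hn with ⟨x, y, h⟩ | h
  · exact good_of_G h
  · exact ⟨fun γ hγ hu => A_fd hnc γ n hn hγ hu.ne_zero, B_div hnc⟩

theorem exists_ne {D : Type*} [DivisionRing D] [Infinite D] (g : ℕ → D) (n : ℕ)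
    (hg : ∀ i x, g i * x = x * g i) (hu : g (n + 1) ≠ 0) :
    ∃ s : D, ∑ i ∈ Finset.range (n + 1), g (i + 1) * s ^ i ≠ 0 := by
  by_contra! hc
  rcases G_or_fd D (n := n + 1) (by omega) with ⟨x, y, h⟩ | h
  · have hP : ∀ x, P g (n + 1) x = g 0 := by
      intro x
      unfold P
      rw [Finset.sum_range_succ']
      have : ∑ k ∈ Finset.range (n + 1), g (k + 1) * x ^ (k + 1) = 0 := by
        have := congrArg (· * x) (hc x)
        simpa [Finset.sum_mul, mul_assoc, ← pow_succ] using this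
      rw [this]; simp
    have hV : V g (n + 1) ≤ ⊥ := by
      unfold V
      rw [AddSubgroup.closure_le]
      rintro _ ⟨a, b, rfl⟩
      simp [hP]
    have hG : ∀ x : Fin (n + 1) ⊕ Fin (n + 1) → D, G (n + 1) x = 0 := by
      intro x
      have := hV (G_mem g (n + 1) x)
      rw [AddSubgroup.mem_bot] at this
      exact (mul_eq_zero.1 this).resolve_left hu
    apply h
    rw [hG, hG]
  · have : Infinite (Subring.center D) := by
      by_contra hc
      rw [not_infinite_iff_finite] at hc
      have : Finite D := Module.finite_of_finite (Subring.center D)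
      exact not_finite D
    have hmem : ∀ i, g i ∈ Subring.center D := fun i => by
      rw [Subring.mem_center_iff]
      intro x
      exact (hg i x).symm
    let p : Polynomial (Subring.center D) := ∑ i ∈ Finset.range (n + 1),
      Polynomial.C ⟨g (i + 1), hmem _⟩ * Polynomial.X ^ i
    have hp : p = 0 := by
      apply Polynomial.funext
      intro c
      rw [Polynomial.eval_zero]
      apply Subtype.ext
      have := hc c
      rw [ZeroMemClass.coe_zero, ← this]
      simp [p, Polynomial.eval_finsetSum]
    have h1 := congrArg (fun q => Polynomial.coeff q n) hp
    simp [p, Polynomial.coeff_X_pow] at h1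
    exact hu h1

theorem P_conj' {R : Type*} [Ring R] (γ : ℕ → R) (n : ℕ) (hγ : ∀ i x, γ i * x = x * γ i)
    {u u' : R} (h : u * u' = 1) (h' : u' * u = 1) (x : R) :
    P γ n (u' * x * u) = u' * P γ n x * u := by
  unfold P
  rw [Finset.mul_sum, Finset.sum_mul]
  apply Finset.sum_congr rfl
  intro i hi
  clear hi
  have : (u' * x * u) ^ i = u' * x ^ i * u := by
    induction i with
    | zero => simp [h']
    | succ i ih =>
      rw [pow_succ, ih, pow_succ]
      simp only [mul_assoc]
      rw [← mul_assoc u u', h, one_mul]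
  rw [this, ← mul_assoc, ← mul_assoc, hγ, mul_assoc u']

theorem V_conj' {R : Type*} [Ring R] (γ : ℕ → R) (n : ℕ) (hγ : ∀ i x, γ i * x = x * γ i)
    {a a' : R} (h : a * a' = 1) (h' : a' * a = 1) {x : R} (hx : x ∈ V γ n) :
    a' * x * a ∈ V γ n := by
  unfold V at hx
  induction hx using AddSubgroup.closure_induction with
  | mem x hx =>
    obtain ⟨u, v, rfl⟩ := hx
    have : a' * (P γ n (u * v) - P γ n (v * u)) * a =
      P γ n ((a' * u * a) * (a' * v * a)) - P γ n ((a' * v * a) * (a' * u * a)) := by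
      have e : ∀ u v : R, (a' * u * a) * (a' * v * a) = a' * (u * v) * a := by
        intro u v
        simp only [mul_assoc]
        rw [← mul_assoc a a', h, one_mul]
      rw [e, e, P_conj' γ n hγ h h', P_conj' γ n hγ h h']
      noncomm_ring
    rw [this]
    exact AddSubgroup.subset_closure ⟨_, _, rfl⟩
  | zero => simp
  | add u v _ _ h1 h2 => rw [mul_add, add_mul]; exact AddSubgroup.add_mem _ h1 h2
  | neg u _ h1 => rw [mul_neg, neg_mul]; exact AddSubgroup.neg_mem _ h1

section Mat

open Matrix

variable {m D : Type*} [Fintype m] [DecidableEq m] [DivisionRing D]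

theorem smz {i j k l : m} (h : j ≠ k) (x y : D) :
    (single i j x : Matrix m m D) * single k l y = 0 :=
  single_mul_single_of_ne _ _ _ _ h _

theorem pow_single1 (i : m) (s : D) (k : ℕ) :
    (single i i s : Matrix m m D) ^ (k + 1) = single i i (s ^ (k + 1)) := by
  induction k with
  | zero => simp
  | succ k ih => rw [pow_succ, ih, single_mul_single_same, ← pow_succ]

theorem pow_single2 {i j : m} (hij : i ≠ j) (s t : D) (k : ℕ) :
    (single i i s + single i j t : Matrix m m D) ^ (k + 1) =
      single i i (s ^ (k + 1)) + single i j (s ^ k * t) := by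
  induction k with
  | zero => simp
  | succ k ih =>
    rw [pow_succ', ih, add_mul, mul_add, mul_add, single_mul_single_same, single_mul_single_same,
      smz hij.symm, smz hij.symm, ← pow_succ',
      ← mul_assoc, ← pow_succ']
    simp

theorem scalar_mul_single (c : D) (i j : m) (x : D) :
    scalar m c * single i j x = single i j (c * x) := by
  rw [scalar_apply, ← smul_eq_diagonal_mul]
  simp

theorem single_mem [Infinite D] (g : ℕ → D) (n : ℕ)
    (hg : ∀ i x, g i * x = x * g i) (hu : g (n + 1) ≠ 0) {i j : m} (hij : i ≠ j) (t : D) :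
    single i j t ∈ V (fun k => scalar m (g k)) (n + 1) := by
  obtain ⟨s, hs⟩ := exists_ne g n hg hu
  set q := ∑ i ∈ Finset.range (n + 1), g (i + 1) * s ^ i with hq
  refine AddSubgroup.subset_closure ⟨single i i 1, single i i s + single i j (q⁻¹ * t), ?_⟩
  have e1 : single i i (1 : D) * (single i i s + single i j (q⁻¹ * t)) =
      single i i s + single i j (q⁻¹ * t) := by
    rw [mul_add, single_mul_single_same, single_mul_single_same, one_mul, one_mul]
  have e2 : (single i i s + single i j (q⁻¹ * t)) * single i i (1 : D) = single i i s := by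
    rw [add_mul, single_mul_single_same, smz hij.symm, mul_one, add_zero]
  rw [e1, e2]
  unfold P
  rw [← Finset.sum_sub_distrib, Finset.sum_range_succ']
  simp only [pow_zero, sub_self, add_zero, pow_single1, pow_single2 hij]
  have e3 : ∀ k, scalar m (g (k + 1)) * (single i i (s ^ (k + 1)) + single i j (s ^ k * (q⁻¹ * t)))
      - scalar m (g (k + 1)) * single i i (s ^ (k + 1)) =
      singleAddMonoidHom i j (g (k + 1) * s ^ k * (q⁻¹ * t)) := by
    intro k
    rw [mul_add, add_sub_cancel_left, scalar_mul_single, mul_assoc]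
    rfl
  simp_rw [e3]
  rw [← map_sum, ← Finset.sum_mul, ← hq, mul_inv_cancel_left₀ hs]
  rfl

theorem good_mat [Infinite D] [Nontrivial m] {n : ℕ} (hn : 1 ≤ n) : Good (Matrix m m D) n := by
  obtain ⟨n, rfl⟩ : ∃ k, n = k + 1 := ⟨n - 1, by omega⟩
  constructor
  · intro γ hγ hu
    have hγ' : ∀ k, ∃ c : D, (∀ x, c * x = x * c) ∧ γ k = scalar m c := by
      intro k
      have h : γ k ∈ Set.center (Matrix m m D) := by
        rw [Semigroup.mem_center_iff]
        intro g
        exact (hγ k g).symm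
      rw [center_eq_scalar_image] at h
      obtain ⟨c, hc, e⟩ := h
      rw [Semigroup.mem_center_iff] at hc
      exact ⟨c, fun x => (hc x).symm, e.symm⟩
    choose g hg hgγ using hγ'
    obtain rfl : γ = fun k => scalar m (g k) := funext hgγ
    have hu' : g (n + 1) ≠ 0 := by
      intro h
      simp only [h, map_zero] at hu
      exact not_isUnit_zero hu
    set W := V (fun k => scalar m (g k)) (n + 1) with hW
    have hs : ∀ {i j : m}, i ≠ j → ∀ t, single i j t ∈ W :=
      fun hij t => single_mem g n hg hu' hij t
    have hE : ∀ {i j : m}, i ≠ j → ∀ x y : D, single i i (x * y) - single j j (y * x) ∈ W := by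
      intro i j hij x y
      have e0 : single j i y * single j i y = 0 := smz hij _ _
      have h1 : (1 + single j i y) * (1 - single j i y) = 1 := by
        have : (1 + single j i y) * (1 - single j i y) = 1 - single j i y * single j i y := by
          noncomm_ring
        rw [this, e0, sub_zero]
      have h2 : (1 - single j i y) * (1 + single j i y) = 1 := by
        have : (1 - single j i y) * (1 + single j i y) = 1 - single j i y * single j i y := by
          noncomm_ring
        rw [this, e0, sub_zero]
      have h3 := V_conj' _ (n + 1) hγ h1 h2 (hs hij x)
      have h4 : (1 - single j i y) * single i j x * (1 + single j i y) =
          single i j x + (single i i (x * y) - single j j (y * x)) - single j i (y * x * y) := by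
        simp only [sub_mul, mul_add, one_mul, mul_one, single_mul_single_same]
        abel
      rw [h4] at h3
      have := W.sub_mem (W.add_mem h3 (hs hij.symm (y * x * y))) (hs hij x)
      convert this using 1
      abel
    have hmain : ∀ (i j k l : m) (x y : D),
        single i j x * single k l y - single k l y * single i j x ∈ W := by
      intro i j k l x y
      by_cases h1 : j = k
      · subst h1
        rw [single_mul_single_same]
        by_cases h2 : l = i
        · subst h2
          rw [single_mul_single_same]
          by_cases h3 : l = j
          · subst h3
            obtain ⟨j', hj'⟩ := _root_.exists_ne l
            have := W.sub_mem (hE hj'.symm x y) (hE hj'.symm (y * x) 1)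
            convert this using 1
            simp
          · exact hE h3 x y
        · rw [smz h2, sub_zero]
          exact hs (Ne.symm h2) _
      · rw [smz h1, zero_sub]
        by_cases h2 : l = i
        · subst h2
          rw [single_mul_single_same]
          exact W.neg_mem (hs (Ne.symm h1) _)
        · rw [smz h2, neg_zero]
          exact W.zero_mem
    have hT : ∀ A : Matrix m m D, A ∈ comSub W := by
      intro A
      rw [matrix_eq_sum_single A]
      refine Subring.sum_mem _ fun i _ => Subring.sum_mem _ fun j _ => ?_
      intro B
      rw [matrix_eq_sum_single B]
      simp only [Finset.mul_sum, Finset.sum_mul]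
      rw [← Finset.sum_sub_distrib]
      refine AddSubgroup.sum_mem _ fun k _ => ?_
      rw [← Finset.sum_sub_distrib]
      exact AddSubgroup.sum_mem _ fun l _ => hmain _ _ _ _ _ _
    intro a b
    exact hT a b
  · obtain ⟨i, j, hij⟩ := exists_pair_ne m
    refine ⟨single i i 1, single i j 1, single j j 1, single j i 1, ?_⟩
    rw [single_mul_single_same, smz hij.symm, single_mul_single_same,
      smz hij, sub_zero, sub_zero, single_mul_single_same,
      single_mul_single_same]
    intro h
    have := congrFun (congrFun h i) i
    simp [single, hij.symm] at this

end Mat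

theorem good_equiv {R S : Type*} [Ring R] [Ring S] (e : R ≃+* S) {n : ℕ} (h : Good S n) :
    Good R n := by
  obtain ⟨hA, a, b, c, d, hB⟩ := h
  constructor
  · intro γ hγ hu x y
    have h1 := hA (fun i => e (γ i)) (by
      intro i x
      obtain ⟨x, rfl⟩ := e.surjective x
      rw [← map_mul, hγ, map_mul]) (hu.map e) (e x) (e y)
    have hP : ∀ x, e.symm (P (fun i => e (γ i)) n x) = P γ n (e.symm x) := by
      intro x
      simp [P]
    have key : ∀ v ∈ V (fun i => e (γ i)) n, e.symm v ∈ V γ n := by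
      intro v hv
      unfold V at hv
      induction hv using AddSubgroup.closure_induction with
      | mem v hv =>
        obtain ⟨a, b, rfl⟩ := hv
        refine AddSubgroup.subset_closure ⟨e.symm a, e.symm b, ?_⟩
        rw [map_sub, hP, hP, map_mul, map_mul]
      | zero => simp
      | add u v _ _ h1 h2 => rw [map_add]; exact AddSubgroup.add_mem _ h1 h2
      | neg u _ h1 => rw [map_neg]; exact AddSubgroup.neg_mem _ h1
    have := key _ h1
    simpa using this
  · refine ⟨e.symm a, e.symm b, e.symm c, e.symm d, fun h => hB ?_⟩
    simp only [← map_mul, ← map_sub] at h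
    exact e.symm.injective h

theorem good_main {R : Type*} [Ring R] [IsSimpleRing R] [Infinite R]
    (hnc : ∃ a b : R, a * b ≠ b * a) {n : ℕ} (hn : 1 ≤ n) : Good R n := by
  by_cases hart : IsArtinianRing R
  · obtain ⟨k, hk, D, hD, ⟨e⟩⟩ := IsSimpleRing.exists_ringEquiv_matrix_divisionRing R
    have hinf : Infinite D := by
      by_contra hc
      rw [not_infinite_iff_finite] at hc
      have : Finite R := Finite.of_equiv _ e.symm.toEquiv
      exact not_finite R
    rcases Nat.lt_or_ge 1 k with h1 | h1
    · have : Nontrivial (Fin k) := Fin.nontrivial_iff_two_le.2 h1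
      exact good_equiv e (good_mat hn)
    · obtain rfl : k = 1 := by
        have := hk.out
        omega
      let e' : R ≃+* D := e.trans Matrix.uniqueRingEquiv
      refine good_equiv e' (good_div ?_ hn)
      obtain ⟨a, b, h⟩ := hnc
      refine ⟨e' a, e' b, fun h' => h ?_⟩
      rw [← map_mul, ← map_mul] at h'
      exact e'.injective h'
  · obtain ⟨x, y, h⟩ := G_of_nonArtinian hart hn
    exact good_of_G h

end PC

theorem stmt_17 (F : Type*) [Field F] (R : Type*) [Ring R] [Algebra F R]
    [Infinite R]
    (hnc : ∃ a b : R, a * b ≠ b * a)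
    (hsimple : IsSimpleRing R)
    (p : Polynomial F) (hdeg : 1 ≤ p.natDegree) :
    AddSubgroup.closure
        {x : R | ∃ a b : R,
          x = Polynomial.aeval (a * b) p - Polynomial.aeval (b * a) p} =
      AddSubgroup.closure {x : R | ∃ a b : R, x = a * b - b * a} ∧
    Subring.closure
        {x : R | ∃ a b : R,
          x = Polynomial.aeval (a * b) p - Polynomial.aeval (b * a) p} = ⊤ := by
  obtain ⟨hA, hB⟩ := PC.good_main hnc hdeg
  let γ : ℕ → R := fun i => algebraMap F R (p.coeff i)
  have hγ : ∀ i x, γ i * x = x * γ i := fun i x => Algebra.commutes _ _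
  have hP : ∀ x : R, Polynomial.aeval x p = PC.P γ p.natDegree x := by
    intro x
    rw [Polynomial.aeval_eq_sum_range]
    unfold PC.P
    simp only [Algebra.smul_def, γ]
  have hu : IsUnit (γ p.natDegree) := by
    apply IsUnit.map
    rw [isUnit_iff_ne_zero]
    intro h
    have : p = 0 := Polynomial.leadingCoeff_eq_zero.1 h
    rw [this] at hdeg
    simp at hdeg
  have h1 : AddSubgroup.closure
        {x : R | ∃ a b : R,
          x = Polynomial.aeval (a * b) p - Polynomial.aeval (b * a) p} =
      AddSubgroup.closure {x : R | ∃ a b : R, x = a * b - b * a} := by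
    have e : AddSubgroup.closure
        {x : R | ∃ a b : R,
          x = Polynomial.aeval (a * b) p - Polynomial.aeval (b * a) p} =
        PC.V γ p.natDegree := by
      simp only [hP]
      rfl
    rw [e]
    apply le_antisymm (PC.V_le γ _ hγ)
    rw [AddSubgroup.closure_le]
    rintro _ ⟨a, b, rfl⟩
    exact hA γ hγ hu a b
  exact ⟨h1, PC.closure_comm_top _ h1 hB⟩
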